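/- arXiv:1602.01021 — 2 statements merged into one kernel-verified Lean document; each statement's English description precedes it below -/
import Mathlib

section
/- Integrality of the first Chern number of a smooth family of projections on the two-torus: let b₁, b₂ ∈ ℝ² be linearly independent, N ≥ 1, and let P : ℝ² → M_N(ℂ) be a C^∞ map satisfying P(k + b₁) = P(k) and P(k + b₂) = P(k) for all k, P(k)² = P(k), and P(k)* = P(k) (conjugate transpose). Then the Chern number C₁ := (1/(2πi)) ∫_B Tr( P(k) [∂₁P(k), ∂₂P(k)] ) dk is an integer, where B = {s₁b₁ + s₂b₂ : s₁, s₂ ∈ [0,1)} is a fundamental domain, ∂_i denotes the partial derivative in the i-th Cartesian coordinate of k, and [A, B] = AB − BA. -/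
open Real Complex MeasureTheory Matrix

attribute [local instance] Matrix.normedAddCommGroup Matrix.normedSpace

open Filter Topology Set
open scoped Interval Ring

/-!
Where an invertible family `V` intertwines idempotents `p` and `Q`, passing from `p` to `Q` changes
the trace of the curvature `Q [∂ᵤQ, ∂ᵥQ]` by the exterior derivative of `τ(p V⁻¹ dV)`. Nearby
idempotents are intertwined by the Kato–Sz.-Nagy formula, so on a thin strip of the torus, compared
with one of its edges, Stokes' theorem turns the flux into the phase `∮ τ(p V⁻¹ dV)` of an
intertwiner between the two boundary loops. Phases add under composition, and by connectedness the
flux through any strip is such a phase. Around the closed torus the resulting `W` commutes with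
`q = Q(0, ·)`, and `tr(q W⁻¹ dW)` is the logarithmic derivative of `det(1 - q + qW)`, whose integral
over a period lies in `2πiℤ`. A general lattice reduces to the unit square by a linear change of
variables, which multiplies the flux by a sign.
-/

section Algebra

attribute [local instance] LieRing.ofAssociativeRing

variable {R : Type*} [Ring R] {p q x y : R}

theorem mul_mul_eq_zero_of_derivation (hq : IsIdempotentElem q) (hy : y = y * q + q * y) :
    q * y * q = 0 := by
  have h : q * y * q = q * y * q + q * y * q := by
    conv_lhs => rw [hy, mul_add, add_mul, ← mul_assoc q q y, hq.eq, ← mul_assoc, mul_assoc, hq.eq]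
  simpa using h

/-- The intertwiner `qp + (1 - q)(1 - p)` of Kato and Sz.-Nagy, which carries the range of an
idempotent `p` to that of an idempotent `q` and is invertible when `q` is close to `p`. -/
def nagyIntertwiner (q p : R) : R := q * p + (1 - q) * (1 - p)

theorem nagyIntertwiner_self (hp : IsIdempotentElem p) : nagyIntertwiner p p = 1 := by
  rw [nagyIntertwiner, hp.eq, hp.one_sub.eq, add_sub_cancel]

theorem mul_nagyIntertwiner (hq : IsIdempotentElem q) (hp : IsIdempotentElem p) :
    q * nagyIntertwiner q p = nagyIntertwiner q p * p := by
  rw [nagyIntertwiner, mul_add, add_mul, ← mul_assoc, hq.eq, ← mul_assoc, hq.mul_one_sub_self,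
    mul_assoc q, hp.eq, mul_assoc (1 - q), hp.one_sub_mul_self, zero_mul, mul_zero]

section Trace

variable {M T : Type*} [AddCommGroup M] [FunLike T R M] [AddMonoidHomClass T R M] {τ : T}

theorem trace_mul_derivation_eq_zero (hτ : ∀ x y, τ (x * y) = τ (y * x))
    (hq : IsIdempotentElem q) (hy : y = y * q + q * y) (hx : Commute x q) : τ (x * y) = 0 := by
  have hqy : τ (x * (q * y)) = 0 :=
    calc τ (x * (q * y)) = τ (q * (x * (q * y))) := by
          rw [← mul_assoc q x, ← hx.eq, mul_assoc x, ← mul_assoc q q, hq.eq]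
      _ = τ (x * (q * y * q)) := by rw [hτ, mul_assoc]
      _ = 0 := by rw [mul_mul_eq_zero_of_derivation hq hy, mul_zero, map_zero]
  have hyq : τ (x * (y * q)) = τ (x * (q * y)) := by
    rw [← mul_assoc, hτ, ← mul_assoc, ← hx.eq, mul_assoc]
  rw [hy, mul_add, map_add, hyq, hqy, add_zero]

theorem trace_mul_lie_lie (hτ : ∀ x y, τ (x * y) = τ (y * x))
    (hp : IsIdempotentElem p) (hy : y = y * p + p * y) :
    τ (p * ⁅⁅x, p⁆, y⁆) = -τ (y * x) := by
  have hpyp : p * y * p = 0 := mul_mul_eq_zero_of_derivation hp hy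
  have hpxpy : τ (p * x * p * y) = 0 :=
    trace_mul_derivation_eq_zero hτ hp hy <| by
      rw [commute_iff_eq, mul_assoc, hp.eq, ← mul_assoc, ← mul_assoc, hp.eq]
  have hexpand : p * ⁅⁅x, p⁆, y⁆ = p * x * p * y - p * p * (x * y) - p * (y * x * p)
      + p * y * p * x := by
    simp only [Ring.lie_def]
    noncomm_ring
  calc τ (p * ⁅⁅x, p⁆, y⁆) = -(τ (p * (x * y)) + τ (p * (y * x * p))) := by
        rw [hexpand, map_add, map_sub, map_sub, hpyp, hpxpy, hp.eq, zero_mul, map_zero]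
        abel
    _ = -(τ (y * p * x) + τ (p * y * x)) := by
        rw [← mul_assoc p x, hτ (p * x), mul_assoc y p, hτ p, mul_assoc (y * x), hp.eq,
          hτ (y * x), mul_assoc p]
    _ = -τ (y * x) := by rw [← map_add, ← add_mul, ← hy]

theorem derivation_add_lie (hp : IsIdempotentElem p) (hy : y = y * p + p * y) :
    y + ⁅x, p⁆ = (y + ⁅x, p⁆) * p + p * (y + ⁅x, p⁆) := by
  have hlie : ⁅x, p⁆ * p + p * ⁅x, p⁆ = ⁅x, p⁆ := by
    rw [Ring.lie_def, sub_mul, mul_sub, mul_assoc x, hp.eq, ← mul_assoc p p, hp.eq, ← mul_assoc]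
    abel
  nth_rw 1 [hy, ← hlie]
  noncomm_ring

theorem trace_mul_lie_add_lie {a b : R} (hτ : ∀ x y, τ (x * y) = τ (y * x))
    (hp : IsIdempotentElem p) (hx : x = x * p + p * x) (hy : y = y * p + p * y) :
    τ (p * ⁅x + ⁅a, p⁆, y + ⁅b, p⁆⁆) =
      τ (p * ⁅x, y⁆) + (τ (x * b) - τ (p * (a * b))) - (τ (y * a) - τ (p * (b * a))) := by
  have hxb : τ (p * ⁅x, ⁅b, p⁆⁆) = τ (x * b) := by
    rw [← lie_skew, mul_neg, map_neg, trace_mul_lie_lie hτ hp hx, neg_neg]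
  have hya : τ (p * ⁅⁅a, p⁆, y + ⁅b, p⁆⁆) = -(τ (y * a) + τ (⁅b, p⁆ * a)) := by
    rw [trace_mul_lie_lie hτ hp (derivation_add_lie hp hy), add_mul, map_add]
  have hba : τ (⁅b, p⁆ * a) = τ (p * (a * b)) - τ (p * (b * a)) := by
    rw [Ring.lie_def, sub_mul, map_sub, mul_assoc p, hτ, ← mul_assoc, hτ]
  rw [add_lie, mul_add, map_add, hya, hba, lie_add, mul_add, map_add, hxb]
  abel

theorem eq_conj_add_lie {v g v' q' p' : R} (hvg : v * g = 1) (hqv : q * v = v * p)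
    (hqv' : q' * v + q * v' = v' * p + v * p') :
    q' = v * (p' + ⁅g * v', p⁆) * g := by
  have hv' : v * (g * v') = v' := by rw [← mul_assoc, hvg, one_mul]
  calc q' = (q' * v + q * v' - q * v') * g := by
        rw [add_sub_cancel_right, mul_assoc, hvg, mul_one]
    _ = (v * p' + (v * (g * v') * p - q * v * (g * v'))) * g := by
        rw [hqv', mul_assoc q, hv']
        abel_nf
    _ = v * (p' + ⁅g * v', p⁆) * g := by
        rw [hqv, Ring.lie_def, mul_add, mul_sub, mul_assoc v p, mul_assoc v (g * v')]

theorem trace_mul_lie_of_conj {v g vₛ vₜ qₛ qₜ pₛ pₜ : R} (hτ : ∀ x y, τ (x * y) = τ (y * x))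
    (hp : IsIdempotentElem p) (hpₛ : pₛ = pₛ * p + p * pₛ) (hpₜ : pₜ = pₜ * p + p * pₜ)
    (hgv : g * v = 1) (hvg : v * g = 1) (hqv : q * v = v * p)
    (hₛ : qₛ * v + q * vₛ = vₛ * p + v * pₛ) (hₜ : qₜ * v + q * vₜ = vₜ * p + v * pₜ) :
    τ (q * ⁅qₛ, qₜ⁆) = τ (p * ⁅pₛ, pₜ⁆) +
      (τ (pₛ * (g * vₜ)) - τ (p * (g * vₛ * (g * vₜ)))) -
      (τ (pₜ * (g * vₛ)) - τ (p * (g * vₜ * (g * vₛ)))) := by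
  have hconj_mul (x y : R) : v * x * g * (v * y * g) = v * (x * y) * g := by
    rw [mul_assoc v y, mul_assoc (v * x), ← mul_assoc g, hgv, one_mul, mul_assoc v x,
      ← mul_assoc x, ← mul_assoc]
  have hq : q = v * p * g := by rw [← hqv, mul_assoc, hvg, mul_one]
  rw [← trace_mul_lie_add_lie hτ hp hpₛ hpₜ, eq_conj_add_lie hvg hqv hₛ,
    eq_conj_add_lie hvg hqv hₜ, hq, Ring.lie_def (v * _ * g), hconj_mul, hconj_mul,
    ← sub_mul, ← mul_sub, hconj_mul, hτ, ← mul_assoc, hgv, one_mul, Ring.lie_def (pₛ + _)]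

theorem holonomy_inv_mul {w z : R} (hq : IsIdempotentElem q) (hz : Commute q z)
    (hzw : z * w = 1) : (1 - q + q * z) * (1 - q + q * w) = 1 := by
  have hqzq : q * z * q = q * z := by rw [mul_assoc, ← hz.eq, ← mul_assoc, hq.eq]
  calc (1 - q + q * z) * (1 - q + q * w)
      = (1 - q) * (1 - q) + (1 - q) * q * w + q * z * (1 - q) + q * z * q * w := by noncomm_ring
    _ = 1 := by
      rw [hq.one_sub.eq, hq.one_sub_mul_self, mul_sub, hqzq, mul_one, sub_self, mul_assoc q z, hzw]
      simp

theorem trace_logDeriv_holonomy {w z q' w' : R} (hτ : ∀ x y, τ (x * y) = τ (y * x))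
    (hq : IsIdempotentElem q) (hq' : q' = q' * q + q * q') (hw : Commute q w) (hz : Commute q z)
    (hwz : w * z = 1) :
    τ ((1 - q + q * z) * (-q' + (q' * w + q * w'))) = τ (q * (z * w')) := by
  have hq1 : Commute (1 - q) q := (Commute.one_left q).sub_left (Commute.refl q)
  have hderiv {x : R} (hx : Commute x q) : τ (x * q') = 0 :=
    trace_mul_derivation_eq_zero hτ hq hq' hx
  have hqz : Commute (q * z) q := (Commute.refl q).mul_left hz.symm
  have htail : (1 - q + q * z) * (q * w') = q * (z * w') := by
    rw [← mul_assoc, add_mul, hq.one_sub_mul_self, zero_add, hqz.eq, ← mul_assoc, hq.eq, mul_assoc]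
  have hcomplement : τ ((1 - q) * (q' * w)) = 0 := by
    rw [← mul_assoc, hτ, ← mul_assoc, hderiv (hw.symm.mul_left hq1)]
  have hrange : τ (q * z * (q' * w)) = 0 := by
    rw [← mul_assoc, hτ, ← mul_assoc, ← mul_assoc, ← hw.eq, mul_assoc q, hwz, mul_one,
      hderiv (Commute.refl q)]
  rw [mul_add, mul_add, htail, mul_neg, map_add, map_add, map_neg, add_mul, add_mul, map_add,
    map_add, hderiv hq1, hderiv hqz, hcomplement, hrange]
  abel

end Trace
end Algebra

section Calculus

variable {E A F : Type*}

/-- The operator-valued curvature `P ⁅∂ᵤP, ∂ᵥP⁆` of a family `P` of idempotents in the directions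
`u` and `v`; its trace is the Berry curvature. -/
noncomputable def berryCurvature [AddCommGroup E] [Module ℝ E] [TopologicalSpace E]
    [Ring A] [Module ℝ A] [TopologicalSpace A] (P : E → A) (k u v : E) : A :=
  P k * ⁅fderiv ℝ P k u, fderiv ℝ P k v⁆

variable [NormedAddCommGroup E] [NormedSpace ℝ E] [NormedRing A] [NormedAlgebra ℝ A]
  [NormedAddCommGroup F] [NormedSpace ℝ F]

/-- The `p`-compression of the pure gauge potential `V⁻¹ ∂ᵥV` in the direction `v`, meaningful
only where `V` is invertible: `Ring.inverse` vanishes on nonunits. -/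
noncomputable def pureGauge (p V : E → A) (k v : E) : A := p k * ((V k)⁻¹ʳ * fderiv ℝ V k v)

theorem periodic_fderiv {V : E → F} {c : E} (hV : Function.Periodic V c) :
    Function.Periodic (fderiv ℝ V) c := fun x => by
  rw [← fderiv_comp_add_right, funext hV]

theorem contDiff_nagyIntertwiner {n : WithTop ℕ∞} {q p : E → A} (hq : ContDiff ℝ n q)
    (hp : ContDiff ℝ n p) :
    ContDiff ℝ n fun x => nagyIntertwiner (q x) (p x) :=
  (hq.mul hp).add ((contDiff_const.sub hq).mul (contDiff_const.sub hp))

theorem fderiv_mul_apply {f g : E → A} {k : E} (hf : DifferentiableAt ℝ f k)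
    (hg : DifferentiableAt ℝ g k) (u : E) :
    fderiv ℝ (fun x => f x * g x) k u = fderiv ℝ f k u * g k + f k * fderiv ℝ g k u := by
  simp [fderiv_fun_mul' hf hg, add_comm]

theorem fderiv_eq_derivation {P : E → A} {k : E} (hP : DifferentiableAt ℝ P k)
    (hidem : ∀ x, IsIdempotentElem (P x)) (u : E) :
    fderiv ℝ P k u = fderiv ℝ P k u * P k + P k * fderiv ℝ P k u := by
  conv_lhs => rw [← funext fun x => (hidem x).eq]
  exact fderiv_mul_apply hP hP u

theorem fderiv_ringInverse_apply [CompleteSpace A] {V : E → A} {k : E}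
    (hV : DifferentiableAt ℝ V k) (hu : IsUnit (V k)) (u : E) :
    fderiv ℝ (fun x => (V x)⁻¹ʳ) k u = -((V k)⁻¹ʳ * fderiv ℝ V k u * (V k)⁻¹ʳ) := by
  obtain ⟨w, hw⟩ := hu
  have h := (hw ▸ hasFDerivAt_ringInverse w : HasFDerivAt _ _ (V k)).comp k hV.hasFDerivAt
  change fderiv ℝ (Ring.inverse ∘ V) k u = _
  rw [h.fderiv]
  simp [← hw]

theorem fderiv_pureGauge_apply [CompleteSpace A] {p V : E → A} {k : E}
    (hp : DifferentiableAt ℝ p k) (hV : ContDiffAt ℝ 2 V k) (hu : IsUnit (V k)) (u v : E) :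
    fderiv ℝ (fun x => pureGauge p V x v) k u =
      fderiv ℝ p k u * ((V k)⁻¹ʳ * fderiv ℝ V k v) -
        p k * ((V k)⁻¹ʳ * fderiv ℝ V k u * ((V k)⁻¹ʳ * fderiv ℝ V k v)) +
        p k * ((V k)⁻¹ʳ * fderiv ℝ (fderiv ℝ V) k u v) := by
  have hdV : DifferentiableAt ℝ V k := hV.differentiableAt two_ne_zero
  have hdg : DifferentiableAt ℝ (fun x => (V x)⁻¹ʳ) k := hdV.inverse hu
  have hd2V : DifferentiableAt ℝ (fderiv ℝ V) k :=
    (hV.fderiv_right (m := 1) le_rfl).differentiableAt one_ne_zero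
  have hd2Vv : DifferentiableAt ℝ (fun x => fderiv ℝ V x v) k :=
    hd2V.clm_apply (differentiableAt_const v)
  have hsecond : fderiv ℝ (fun x => fderiv ℝ V x v) k u = fderiv ℝ (fderiv ℝ V) k u v := by
    simp [fderiv_clm_apply hd2V (differentiableAt_const v)]
  simp only [pureGauge]
  rw [fderiv_mul_apply hp (hdg.fun_mul hd2Vv), fderiv_mul_apply hdg hd2Vv,
    fderiv_ringInverse_apply hdV hu, hsecond]
  noncomm_ring

theorem continuous_berryCurvature {P : E → A} (hP : ContDiff ℝ 1 P) (u v : E) :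
    Continuous fun x => berryCurvature P x u v := by
  have hfderiv (w : E) : Continuous fun x => fderiv ℝ P x w :=
    (hP.continuous_fderiv one_ne_zero).clm_apply continuous_const
  exact hP.continuous.mul
    (((hfderiv u).mul (hfderiv v)).sub ((hfderiv v).mul (hfderiv u)))

theorem contDiffAt_pureGauge [CompleteSpace A] {p V : E → A} {k : E} (hp : ContDiffAt ℝ 1 p k)
    (hV : ContDiffAt ℝ 2 V k) (hu : IsUnit (V k)) (v : E) :
    ContDiffAt ℝ 1 (fun x => pureGauge p V x v) k := by
  obtain ⟨w, hw⟩ := hu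
  have hinv : ContDiffAt ℝ 1 (fun x => (V x)⁻¹ʳ) k :=
    (hw ▸ contDiffAt_ringInverse ℝ w : ContDiffAt ℝ 1 Ring.inverse (V k)).comp k
      (hV.of_le one_le_two)
  exact hp.mul (hinv.mul ((hV.fderiv_right le_rfl).clm_apply contDiffAt_const))

theorem map_berryCurvature_of_gauge [CompleteSpace A] {τ : A →L[ℝ] F}
    (hτ : ∀ x y, τ (x * y) = τ (y * x)) {p Q V : E → A} {k : E} (hp : ContDiffAt ℝ 1 p k)
    (hQ : DifferentiableAt ℝ Q k) (hV : ContDiffAt ℝ 2 V k) (hu : IsUnit (V k))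
    (hidem : ∀ x, IsIdempotentElem (p x)) (hQV : ∀ x, Q x * V x = V x * p x) (u v : E) :
    τ (berryCurvature Q k u v) = τ (berryCurvature p k u v) +
      fderiv ℝ (fun x => τ (pureGauge p V x v)) k u -
      fderiv ℝ (fun x => τ (pureGauge p V x u)) k v := by
  have hdp : DifferentiableAt ℝ p k := hp.differentiableAt one_ne_zero
  have hdV : DifferentiableAt ℝ V k := hV.differentiableAt two_ne_zero
  have hderiv (w : E) : fderiv ℝ Q k w * V k + Q k * fderiv ℝ V k w =
      fderiv ℝ V k w * p k + V k * fderiv ℝ p k w := by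
    rw [← fderiv_mul_apply hQ hdV, funext hQV, fderiv_mul_apply hdV hdp]
  have hmap (w z : E) : fderiv ℝ (fun x => τ (pureGauge p V x w)) k z =
      τ (fderiv ℝ (fun x => pureGauge p V x w) k z) := by
    have hdiff := (contDiffAt_pureGauge hp hV hu w).differentiableAt one_ne_zero
    exact DFunLike.congr_fun (τ.hasFDerivAt.comp k hdiff.hasFDerivAt).fderiv z
  have hsymm : fderiv ℝ (fderiv ℝ V) k v u = fderiv ℝ (fderiv ℝ V) k u v :=
    (hV.isSymmSndFDerivAt (by simp)).eq v u
  rw [berryCurvature, berryCurvature, trace_mul_lie_of_conj hτ (hidem k)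
    (fderiv_eq_derivation hdp hidem u) (fderiv_eq_derivation hdp hidem v)
    (Ring.inverse_mul_cancel _ hu) (Ring.mul_inverse_cancel _ hu) (hQV k) (hderiv u) (hderiv v),
    hmap, hmap, fderiv_pureGauge_apply hdp hV hu, fderiv_pureGauge_apply hdp hV hu, hsymm]
  simp only [map_add, map_sub]
  abel

theorem map_pureGauge_mul {τ : A →L[ℝ] F} (hτ : ∀ x y, τ (x * y) = τ (y * x))
    {p q V W : E → A} {k : E} (hW : DifferentiableAt ℝ W k) (hV : DifferentiableAt ℝ V k)
    (hWu : IsUnit (W k)) (hVu : IsUnit (V k)) (hqV : q k * V k = V k * p k) (v : E) :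
    τ (pureGauge p (fun x => W x * V x) k v) =
      τ (pureGauge q W k v) + τ (pureGauge p V k v) := by
  have hconj : V k * (p k * (V k)⁻¹ʳ) = q k := by
    rw [← mul_assoc, ← hqV, mul_assoc, Ring.mul_inverse_cancel _ hVu, mul_one]
  have hexpand : pureGauge p (fun x => W x * V x) k v =
      p k * (V k)⁻¹ʳ * ((W k)⁻¹ʳ * fderiv ℝ W k v) * V k + pureGauge p V k v := by
    rw [pureGauge, pureGauge, fderiv_mul_apply hW hV, Ring.inverse_mul (Or.inl hWu), mul_add,
      mul_add, mul_assoc _ (W k)⁻¹ʳ (W k * _), Ring.inverse_mul_cancel_left _ _ hWu]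
    noncomm_ring
  rw [hexpand, map_add, hτ, ← mul_assoc, hconj, ← pureGauge]

end Calculus

section Plane

variable {F : Type*} [NormedAddCommGroup F] [NormedSpace ℝ F]

theorem periodic_slice {X : Type*} {f : ℝ × ℝ → X} (hf : Function.Periodic f (0, 1)) (s : ℝ) :
    Function.Periodic (fun t => f (s, t)) 1 := fun t => by
  simpa using hf (s, t)

theorem contDiff_slice {n : WithTop ℕ∞} {f : ℝ × ℝ → F} (hf : ContDiff ℝ n f) (s : ℝ) :
    ContDiff ℝ n fun t => f (s, t) :=
  hf.comp (contDiff_const.prodMk contDiff_id)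

theorem fderiv_slice_apply {V : ℝ × ℝ → F} {s t : ℝ} (hV : DifferentiableAt ℝ V (s, t)) :
    fderiv ℝ (fun t' => V (s, t')) t 1 = fderiv ℝ V (s, t) (0, 1) := by
  have h := hV.hasFDerivAt.comp_hasDerivAt t ((hasDerivAt_const t s).prodMk (hasDerivAt_id t))
  rw [fderiv_apply_one_eq_deriv]
  exact h.deriv

theorem integral_curl_eq_sub_of_eq {f g : ℝ × ℝ → F} {a b c d : ℝ}
    (hf : ∀ x ∈ [[a, b]] ×ˢ [[c, d]], ContDiffAt ℝ 1 f x)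
    (hg : ∀ x ∈ [[a, b]] ×ˢ [[c, d]], ContDiffAt ℝ 1 g x)
    (hper : ∀ s, g (s, c) = g (s, d)) :
    ∫ s in a..b, ∫ t in c..d, (fderiv ℝ f (s, t) (1, 0) - fderiv ℝ g (s, t) (0, 1)) =
      (∫ t in c..d, f (b, t)) - ∫ t in c..d, f (a, t) := by
  have hsub : Ioo (min a b) (max a b) ×ˢ Ioo (min c d) (max c d) ⊆ [[a, b]] ×ˢ [[c, d]] :=
    prod_mono Ioo_subset_Icc_self Ioo_subset_Icc_self
  have hderiv {h : ℝ × ℝ → F} (hh : ∀ x ∈ [[a, b]] ×ˢ [[c, d]], ContDiffAt ℝ 1 h x)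
      (v : ℝ × ℝ) : ContinuousOn (fun x => fderiv ℝ h x v) ([[a, b]] ×ˢ [[c, d]]) := fun x hx =>
    (((hh x hx).fderiv_right (m := 0) (by simp)).continuousAt.clm_apply
      continuousAt_const).continuousWithinAt
  have hmain := integral2_divergence_prod_of_hasFDerivAt f (fun x => -g x) (fderiv ℝ f)
    (fun x => -fderiv ℝ g x) a c b d (fun x hx => (hf x hx).continuousAt.continuousWithinAt)
    (fun x hx => (hg x hx).continuousAt.continuousWithinAt.neg)
    (fun x hx => ((hf x (hsub hx)).differentiableAt one_ne_zero).hasFDerivAt)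
    (fun x hx => ((hg x (hsub hx)).differentiableAt one_ne_zero).hasFDerivAt.neg)
    (((hderiv hf (1, 0)).add (hderiv hg (0, 1)).neg).integrableOn_compact
      (isCompact_uIcc.prod isCompact_uIcc))
  simpa [hper, ← sub_eq_add_neg] using hmain

end Plane

section Holonomy

variable {A F : Type*} [NormedRing A] [NormedAlgebra ℝ A] [NormedAddCommGroup F] [NormedSpace ℝ F]

/-- `W` is a loop of invertible elements, parametrized by `ℝ` with period `1`, that intertwines the
families `p` and `q`. -/
structure IsLoopIntertwiner (p q W : ℝ → A) : Prop where
  contDiff : ContDiff ℝ 1 W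
  periodic : Function.Periodic W 1
  isUnit (t : ℝ) : IsUnit (W t)
  intertwines (t : ℝ) : q t * W t = W t * p t

/-- The phase `∮ τ(p W⁻¹ dW)` of a loop intertwiner `W` over the loop `p`. -/
noncomputable def holonomyPhase (τ : A →L[ℝ] F) (p W : ℝ → A) : F :=
  ∫ t in 0..1, τ (pureGauge p W t 1)

/-- The flux of the trace of the curvature of `Q` through the strip `[a, b] × [0, 1]`. -/
noncomputable def berryFlux (τ : A →L[ℝ] F) (Q : ℝ × ℝ → A) (a b : ℝ) : F :=
  ∫ s in a..b, ∫ t in 0..1, τ (berryCurvature Q (s, t) (1, 0) (0, 1))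

theorem berryFlux_add_adjacent (τ : A →L[ℝ] F) {Q : ℝ × ℝ → A} (hQ : ContDiff ℝ 1 Q)
    (a b c : ℝ) :
    berryFlux τ Q a b + berryFlux τ Q b c = berryFlux τ Q a c := by
  have hcont : Continuous fun s => ∫ t in 0..1, τ (berryCurvature Q (s, t) (1, 0) (0, 1)) :=
    intervalIntegral.continuous_parametric_intervalIntegral_of_continuous'
      (f := fun s t => τ (berryCurvature Q (s, t) (1, 0) (0, 1)))
      (τ.continuous.comp (continuous_berryCurvature hQ _ _)) 0 1
  exact intervalIntegral.integral_add_adjacent_intervals (hcont.intervalIntegrable a b)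
    (hcont.intervalIntegrable b c)

theorem pureGauge_slice {p V : ℝ × ℝ → A} {s t : ℝ} (hV : DifferentiableAt ℝ V (s, t)) :
    pureGauge (fun t' => p (s, t')) (fun t' => V (s, t')) t 1 = pureGauge p V (s, t) (0, 1) := by
  rw [pureGauge, fderiv_slice_apply hV, pureGauge]

theorem holonomyPhase_one (τ : A →L[ℝ] F) (p : ℝ → A) :
    holonomyPhase τ p (fun _ => 1) = 0 := by
  simp [holonomyPhase, pureGauge]

theorem berryCurvature_comp_snd {p : ℝ → A} (hp : Differentiable ℝ p) (x u v : ℝ × ℝ)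
    (hu : u.2 = 0) : berryCurvature (fun x => p x.2) x u v = 0 := by
  have h : fderiv ℝ (fun x : ℝ × ℝ => p x.2) x u = 0 :=
    (DFunLike.congr_fun ((hp x.2).hasFDerivAt.comp x hasFDerivAt_snd).fderiv u).trans (by simp [hu])
  rw [berryCurvature, h, Ring.lie_def, zero_mul, mul_zero, sub_zero, mul_zero]

theorem IsLoopIntertwiner.mul {p q r W V : ℝ → A} (hW : IsLoopIntertwiner q r W)
    (hV : IsLoopIntertwiner p q V) : IsLoopIntertwiner p r fun t => W t * V t where
  contDiff := hW.contDiff.mul hV.contDiff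
  periodic := hW.periodic.mul hV.periodic
  isUnit t := (hW.isUnit t).mul (hV.isUnit t)
  intertwines t := by rw [← mul_assoc, hW.intertwines, mul_assoc, hV.intertwines, ← mul_assoc]

variable [CompleteSpace A]

theorem IsLoopIntertwiner.continuous_pureGauge {p q W : ℝ → A} (hW : IsLoopIntertwiner p q W)
    (hp : Continuous p) (v : ℝ) : Continuous fun t => pureGauge p W t v := by
  have hinv : Continuous fun t => (W t)⁻¹ʳ := continuous_iff_continuousAt.2 fun t => by
    obtain ⟨w, hw⟩ := hW.isUnit t
    exact (hw ▸ NormedRing.inverse_continuousAt w : ContinuousAt Ring.inverse (W t)).comp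
      hW.contDiff.continuous.continuousAt
  exact hp.mul (hinv.mul ((hW.contDiff.continuous_fderiv one_ne_zero).clm_apply continuous_const))

theorem IsLoopIntertwiner.holonomyPhase_mul {τ : A →L[ℝ] F} (hτ : ∀ x y, τ (x * y) = τ (y * x))
    {p q r W V : ℝ → A} (hp : Continuous p) (hq : Continuous q)
    (hW : IsLoopIntertwiner q r W) (hV : IsLoopIntertwiner p q V) :
    holonomyPhase τ p (fun t => W t * V t) = holonomyPhase τ q W + holonomyPhase τ p V := by
  have hint {p q W : ℝ → A} (hW : IsLoopIntertwiner p q W) (hp : Continuous p) :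
      IntervalIntegrable (fun t => τ (pureGauge p W t 1)) volume 0 1 :=
    (τ.continuous.comp (hW.continuous_pureGauge hp 1)).intervalIntegrable 0 1
  rw [holonomyPhase, holonomyPhase, holonomyPhase,
    ← intervalIntegral.integral_add (hint hW hq) (hint hV hp)]
  exact intervalIntegral.integral_congr fun t _ => map_pureGauge_mul hτ
    (hW.contDiff.differentiable one_ne_zero t) (hV.contDiff.differentiable one_ne_zero t)
    (hW.isUnit t) (hV.isUnit t) (hV.intertwines t) 1

end Holonomy

section Strip

variable {A F : Type*} [NormedRing A] [NormedAlgebra ℝ A]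

theorem isLoopIntertwiner_nagyIntertwiner {p q : ℝ → A} (hp : ContDiff ℝ 1 p)
    (hq : ContDiff ℝ 1 q) (hpidem : ∀ t, IsIdempotentElem (p t))
    (hqidem : ∀ t, IsIdempotentElem (q t)) (hpper : Function.Periodic p 1)
    (hqper : Function.Periodic q 1) (hu : ∀ t, IsUnit (nagyIntertwiner (q t) (p t))) :
    IsLoopIntertwiner p q fun t => nagyIntertwiner (q t) (p t) where
  contDiff := contDiff_nagyIntertwiner hq hp
  periodic t := by simp only [hpper t, hqper t]
  isUnit := hu
  intertwines t := mul_nagyIntertwiner (hqidem t) (hpidem t)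

variable [CompleteSpace A] [NormedAddCommGroup F] [NormedSpace ℝ F]
  {τ : A →L[ℝ] F} {Q V : ℝ × ℝ → A} {p : ℝ → A} {a b : ℝ}

theorem berryFlux_eq_sub_of_gauge (hτ : ∀ x y, τ (x * y) = τ (y * x)) (hQ : Differentiable ℝ Q)
    (hp : ContDiff ℝ 1 p) (hpidem : ∀ t, IsIdempotentElem (p t)) (hpper : Function.Periodic p 1)
    (hV : ContDiff ℝ 2 V) (hVper : Function.Periodic V (0, 1))
    (hu : ∀ x ∈ [[a, b]] ×ˢ univ, IsUnit (V x)) (hQV : ∀ x, Q x * V x = V x * p x.2) :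
    berryFlux τ Q a b =
      holonomyPhase τ p (fun t => V (b, t)) - holonomyPhase τ p (fun t => V (a, t)) := by
  have hp' : ContDiff ℝ 1 fun x : ℝ × ℝ => p x.2 := hp.comp contDiff_snd
  have hphase (s : ℝ) : holonomyPhase τ p (fun t => V (s, t)) =
      ∫ t in 0..1, τ (pureGauge (fun x => p x.2) V (s, t) (0, 1)) := by
    simp only [holonomyPhase, ← pureGauge_slice (hV.differentiable two_ne_zero _)]
  have hgauge (v x : ℝ × ℝ) (hx : x ∈ [[a, b]] ×ˢ [[0, 1]]) :
      ContDiffAt ℝ 1 (fun x => τ (pureGauge (fun x => p x.2) V x v)) x :=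
    τ.contDiff.contDiffAt.comp x <| contDiffAt_pureGauge hp'.contDiffAt hV.contDiffAt
      (hu x ⟨hx.1, mem_univ _⟩) v
  have hper (s : ℝ) : τ (pureGauge (fun x => p x.2) V (s, 0) (1, 0)) =
      τ (pureGauge (fun x => p x.2) V (s, 1) (1, 0)) := by
    have hs : ((s, 0) + (0, 1) : ℝ × ℝ) = (s, 1) := by simp
    rw [pureGauge, pureGauge, ← hs, hVper, periodic_fderiv hVper, Prod.snd_add, hpper]
  have hcurv (s : ℝ) (hs : s ∈ [[a, b]]) (t : ℝ) :
      τ (berryCurvature Q (s, t) (1, 0) (0, 1)) =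
        fderiv ℝ (fun x => τ (pureGauge (fun x => p x.2) V x (0, 1))) (s, t) (1, 0) -
          fderiv ℝ (fun x => τ (pureGauge (fun x => p x.2) V x (1, 0))) (s, t) (0, 1) := by
    rw [map_berryCurvature_of_gauge hτ hp'.contDiffAt (hQ _) hV.contDiffAt
      (hu _ ⟨hs, mem_univ t⟩) (fun x => hpidem x.2) hQV,
      berryCurvature_comp_snd (hp.differentiable one_ne_zero) _ _ _ rfl, map_zero, zero_add]
  rw [hphase, hphase, ← integral_curl_eq_sub_of_eq (hgauge _) (hgauge _) hper]
  exact intervalIntegral.integral_congr fun s hs => by simp only [hcurv s hs]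

theorem holonomyPhase_nagyIntertwiner (hτ : ∀ x y, τ (x * y) = τ (y * x)) (hQ : ContDiff ℝ 2 Q)
    (hidem : ∀ x, IsIdempotentElem (Q x)) (hper : Function.Periodic Q (0, 1))
    (hu : ∀ s ∈ [[a, b]], ∀ t, IsUnit (nagyIntertwiner (Q (s, t)) (Q (a, t)))) :
    holonomyPhase τ (fun t => Q (a, t)) (fun t => nagyIntertwiner (Q (b, t)) (Q (a, t))) =
      berryFlux τ Q a b := by
  have hslice : ContDiff ℝ 2 fun t => Q (a, t) := contDiff_slice hQ a
  have hperslice : Function.Periodic (fun t => Q (a, t)) 1 := periodic_slice hper a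
  have hinit : (fun t => nagyIntertwiner (Q (a, t)) (Q (a, t))) = fun _ => 1 :=
    funext fun t => nagyIntertwiner_self (hidem _)
  rw [berryFlux_eq_sub_of_gauge (V := fun x => nagyIntertwiner (Q x) (Q (a, x.2))) hτ
    (hQ.differentiable two_ne_zero) (hslice.of_le one_le_two) (fun t => hidem _) hperslice
    (contDiff_nagyIntertwiner hQ (hslice.comp contDiff_snd))
    (fun x => by simp only [hper x, Prod.snd_add, hperslice x.2]) (fun x hx => hu x.1 hx.1 x.2)
    (fun x => mul_nagyIntertwiner (hidem _) (hidem _)), hinit, holonomyPhase_one, sub_zero]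

end Strip

section Transport

variable {A F : Type*} [NormedRing A] [CompleteSpace A] {Q : ℝ × ℝ → A}

theorem eventually_isUnit_nagyIntertwiner (hQ : Continuous Q)
    (hidem : ∀ x, IsIdempotentElem (Q x)) (hper : Function.Periodic Q (0, 1)) (s₀ : ℝ) :
    ∀ᶠ z in 𝓝 (s₀, s₀), ∀ t, IsUnit (nagyIntertwiner (Q (z.1, t)) (Q (z.2, t))) := by
  have hcont : Continuous fun x : (ℝ × ℝ) × ℝ =>
      nagyIntertwiner (Q (x.1.1, x.2)) (Q (x.1.2, x.2)) := by
    unfold nagyIntertwiner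
    fun_prop
  have hlocal (t : ℝ) : ∀ᶠ x : (ℝ × ℝ) × ℝ in 𝓝 ((s₀, s₀), t),
      IsUnit (nagyIntertwiner (Q (x.1.1, x.2)) (Q (x.1.2, x.2))) := by
    have hone : IsUnit (nagyIntertwiner (Q (s₀, t)) (Q (s₀, t))) :=
      (nagyIntertwiner_self (hidem _)).symm ▸ isUnit_one
    exact hcont.continuousAt.eventually (Units.isOpen.mem_nhds hone)
  have hcompact : ∀ᶠ z in 𝓝 (s₀, s₀), ∀ t ∈ Icc (0 : ℝ) 1,
      IsUnit (nagyIntertwiner (Q (z.1, t)) (Q (z.2, t))) :=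
    isCompact_Icc.eventually_forall_of_forall_eventually fun t _ => hlocal t
  filter_upwards [hcompact] with z hz t
  have hperz : Function.Periodic (fun t => nagyIntertwiner (Q (z.1, t)) (Q (z.2, t))) 1 :=
    fun t => by simp only [periodic_slice hper _ t]
  obtain ⟨t', ht', h⟩ := hperz.exists_mem_Ico₀ one_pos t
  simpa only [h] using hz t' (Ico_subset_Icc_self ht')

variable [NormedAlgebra ℝ A] [NormedAddCommGroup F] [NormedSpace ℝ F]
  {τ : A →L[ℝ] F}

theorem exists_loopIntertwiner_of_isUnit_nagyIntertwiner (hτ : ∀ x y, τ (x * y) = τ (y * x))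
    (hQ : ContDiff ℝ 2 Q) (hidem : ∀ x, IsIdempotentElem (Q x))
    (hper : Function.Periodic Q (0, 1)) {a b : ℝ}
    (hu : ∀ s ∈ [[a, b]], ∀ t, IsUnit (nagyIntertwiner (Q (s, t)) (Q (a, t)))) :
    ∃ W, IsLoopIntertwiner (fun t => Q (a, t)) (fun t => Q (b, t)) W ∧
      holonomyPhase τ (fun t => Q (a, t)) W = berryFlux τ Q a b :=
  ⟨_, isLoopIntertwiner_nagyIntertwiner (contDiff_slice (hQ.of_le one_le_two) a)
    (contDiff_slice (hQ.of_le one_le_two) b) (fun _ => hidem _) (fun _ => hidem _)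
    (periodic_slice hper a) (periodic_slice hper b) (hu b right_mem_uIcc),
    holonomyPhase_nagyIntertwiner hτ hQ hidem hper hu⟩

theorem exists_loopIntertwiner_holonomyPhase_eq (hτ : ∀ x y, τ (x * y) = τ (y * x))
    (hQ : ContDiff ℝ 2 Q) (hidem : ∀ x, IsIdempotentElem (Q x))
    (hper : Function.Periodic Q (0, 1)) (a b : ℝ) :
    ∃ W, IsLoopIntertwiner (fun t => Q (a, t)) (fun t => Q (b, t)) W ∧
      holonomyPhase τ (fun t => Q (a, t)) W = berryFlux τ Q a b := by
  have hcont (s : ℝ) : Continuous fun t => Q (s, t) := (contDiff_slice hQ s).continuous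
  refine PreconnectedSpace.induction₂' (P := fun a b => ∃ W,
    IsLoopIntertwiner (fun t => Q (a, t)) (fun t => Q (b, t)) W ∧
      holonomyPhase τ (fun t => Q (a, t)) W = berryFlux τ Q a b) ?near ⟨?trans⟩ a b
  case near =>
    intro s₀
    obtain ⟨ε, hε, hball⟩ := Metric.eventually_nhds_iff_ball.1
      (eventually_isUnit_nagyIntertwiner hQ.continuous hidem hper s₀)
    have hunit {a b : ℝ} (ha : a ∈ Metric.ball s₀ ε) (hb : b ∈ Metric.ball s₀ ε) :
        ∀ s ∈ [[a, b]], ∀ t, IsUnit (nagyIntertwiner (Q (s, t)) (Q (a, t))) := fun s hs =>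
      hball (s, a) <| ball_prod_same s₀ s₀ ε ▸
        ⟨(convex_ball s₀ ε).ordConnected.uIcc_subset ha hb hs, ha⟩
    have hs₀ : s₀ ∈ Metric.ball s₀ ε := Metric.mem_ball_self hε
    filter_upwards [Metric.ball_mem_nhds s₀ hε] with s hs
    exact ⟨exists_loopIntertwiner_of_isUnit_nagyIntertwiner hτ hQ hidem hper (hunit hs₀ hs),
      exists_loopIntertwiner_of_isUnit_nagyIntertwiner hτ hQ hidem hper (hunit hs hs₀)⟩
  case trans =>
    rintro a b c ⟨V, hV, hVflux⟩ ⟨W, hW, hWflux⟩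
    refine ⟨_, hW.mul hV, ?_⟩
    rw [IsLoopIntertwiner.holonomyPhase_mul hτ (hcont a) (hcont b) hW hV, hVflux, hWflux,
      add_comm, berryFlux_add_adjacent τ (hQ.of_le one_le_two)]

end Transport

section Determinant

open scoped Matrix.Norms.Operator

variable {𝕜 n : Type*} [NontriviallyNormedField 𝕜] [CompleteSpace 𝕜] [Fintype n] [DecidableEq n]

theorem differentiable_det : Differentiable 𝕜 (det : Matrix n n 𝕜 → 𝕜) := by
  have (i j : n) : Differentiable 𝕜 fun M : Matrix n n 𝕜 => M i j :=
    (entryLinearMap 𝕜 𝕜 i j).toContinuousLinearMap.differentiable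
  simp only [funext fun M : Matrix n n 𝕜 => det_apply' M]
  fun_prop

theorem fderiv_det_one_apply (M : Matrix n n 𝕜) :
    fderiv 𝕜 det (1 : Matrix n n 𝕜) M = M.trace := by
  have hline : HasDerivAt (fun r : 𝕜 => (1 : Matrix n n 𝕜) + r • M) ((1 : 𝕜) • M) 0 :=
    ((hasDerivAt_id (0 : 𝕜)).smul_const M).const_add 1
  rw [one_smul] at hline
  have hdet : HasDerivAt (fun r : 𝕜 => (1 + r • M).det) (fderiv 𝕜 det 1 M) 0 :=
    HasFDerivAt.comp_hasDerivAt_of_eq 0 (differentiable_det 1).hasFDerivAt hline (by simp)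
  have hpoly : HasDerivAt (fun r : 𝕜 => (1 + r • M).det) M.trace 0 := by
    rw [← derivative_det_one_add_X_smul]
    convert! Polynomial.hasDerivAt _ (0 : 𝕜) using 2 with r
    simp [eval_det, ← smul_eq_mul_diagonal]
  exact hdet.unique hpoly

theorem fderiv_det_apply {X W : Matrix n n 𝕜} (hWX : W * X = 1) (M : Matrix n n 𝕜) :
    fderiv 𝕜 det X M = (W * M).trace * X.det := by
  have hdet (Y : Matrix n n 𝕜) : X.det * (W * Y).det = Y.det := by
    rw [← det_mul, ← mul_assoc, mul_eq_one_comm.1 hWX, one_mul]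
  have hcomp : HasFDerivAt (fun Y : Matrix n n 𝕜 => X.det * (W * Y).det) _ X :=
    (HasFDerivAt.comp X (hWX.symm ▸ (differentiable_det 1).hasFDerivAt)
      ((hasFDerivAt_id X).const_mul W)).const_mul X.det
  rw [funext hdet, hWX] at hcomp
  calc fderiv 𝕜 det X M = X.det * fderiv 𝕜 det 1 (W * M) := DFunLike.congr_fun hcomp.fderiv M
    _ = (W * M).trace * X.det := by rw [fderiv_det_one_apply, mul_comm]

end Determinant

section Winding

open scoped Matrix.Norms.Operator

variable {n : Type*} [Fintype n] [DecidableEq n]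

theorem exists_int_integral_logDeriv_eq {a b : ℝ} {h φ : ℝ → ℂ} (hφ : Continuous φ)
    (hh : ∀ t, HasDerivAt h (φ t * h t) t) (hab : h a = h b) (hne : h a ≠ 0) :
    ∃ m : ℤ, ∫ t in a..b, φ t = m * (2 * π * I) := by
  have hconst (t : ℝ) : HasDerivAt (fun t => h t * exp (-∫ u in a..t, φ u)) 0 t := by
    have hΦ : HasDerivAt (fun t => ∫ u in a..t, φ u) (φ t) t :=
      (hφ.integral_hasStrictDerivAt a t).hasDerivAt
    refine ((hh t).fun_mul hΦ.fun_neg.cexp).congr_deriv ?_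
    ring
  have heq : h b * exp (-∫ u in a..b, φ u) = h a * exp (-∫ u in a..a, φ u) :=
    is_const_of_deriv_eq_zero (fun t => (hconst t).differentiableAt)
      (fun t => (hconst t).deriv) b a
  rw [← hab, intervalIntegral.integral_same, neg_zero, Complex.exp_zero] at heq
  have hexp : exp (-∫ u in a..b, φ u) = 1 := mul_left_cancel₀ hne heq
  rwa [Complex.exp_neg, inv_eq_one, Complex.exp_eq_one_iff] at hexp

variable (n) in
/-- The trace as a continuous real-linear map on complex matrices. -/
noncomputable def traceCLM : Matrix n n ℂ →L[ℝ] ℂ :=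
  (traceLinearMap n ℝ ℂ).toContinuousLinearMap

theorem exists_int_holonomyPhase_eq {q W : ℝ → Matrix n n ℂ} (hq : ContDiff ℝ 1 q)
    (hidem : ∀ t, IsIdempotentElem (q t)) (hper : Function.Periodic q 1)
    (hW : IsLoopIntertwiner q q W) :
    ∃ m : ℤ, holonomyPhase (traceCLM n) q W = m * (2 * π * I) := by
  have hqW (t : ℝ) : Commute (q t) (W t) := hW.intertwines t
  have hqZ (t : ℝ) : Commute (q t) (W t)⁻¹ʳ := by
    obtain ⟨w, hw⟩ := hW.isUnit t
    rw [← hw, Ring.inverse_unit]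
    exact Commute.units_inv_right (hw ▸ hqW t)
  have hinv (t : ℝ) : (1 - q t + q t * (W t)⁻¹ʳ) * (1 - q t + q t * W t) = 1 :=
    holonomy_inv_mul (hidem t) (hqZ t) (Ring.inverse_mul_cancel _ (hW.isUnit t))
  have hq' (t : ℝ) : HasDerivAt q (fderiv ℝ q t 1) t :=
    (hq.differentiable one_ne_zero t).hasFDerivAt.hasDerivAt
  have hW' (t : ℝ) : HasDerivAt W (fderiv ℝ W t 1) t :=
    (hW.contDiff.differentiable one_ne_zero t).hasFDerivAt.hasDerivAt
  have hdet (t : ℝ) : HasDerivAt (fun t => (1 - q t + q t * W t).det)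
      (traceCLM n (pureGauge q W t 1) * (1 - q t + q t * W t).det) t := by
    have h := ((differentiable_det _).hasFDerivAt.restrictScalars ℝ).comp_hasDerivAt t
      (((hq' t).const_sub 1).add ((hq' t).mul (hW' t)))
    refine h.congr_deriv ((fderiv_det_apply (hinv t) _).trans (congrArg (· * _) ?_))
    exact trace_logDeriv_holonomy (τ := traceCLM n) trace_mul_comm (hidem t)
      (fderiv_eq_derivation (hq.differentiable one_ne_zero t) hidem 1) (hqW t) (hqZ t)
      (Ring.mul_inverse_cancel _ (hW.isUnit t))
  refine exists_int_integral_logDeriv_eq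
    ((traceCLM n).continuous.comp (hW.continuous_pureGauge hq.continuous 1)) hdet ?_ fun h0 => ?_
  · rw [← zero_add (1 : ℝ), hper, hW.periodic]
  · simpa [h0] using congrArg det (hinv 0)

theorem exists_int_berryFlux_eq {Q : ℝ × ℝ → Matrix n n ℂ} (hQ : ContDiff ℝ 2 Q)
    (hidem : ∀ x, IsIdempotentElem (Q x)) (hper₁ : Function.Periodic Q (1, 0))
    (hper₂ : Function.Periodic Q (0, 1)) :
    ∃ m : ℤ, berryFlux (traceCLM n) Q 0 1 = m * (2 * π * I) := by
  obtain ⟨W, hW, hflux⟩ :=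
    exists_loopIntertwiner_holonomyPhase_eq (τ := traceCLM n) trace_mul_comm hQ hidem hper₂ 0 1
  have hclosed : (fun t => Q (1, t)) = fun t => Q (0, t) := by
    funext t
    simpa using hper₁ (0, t)
  rw [← hflux]
  exact exists_int_holonomyPhase_eq ((contDiff_slice hQ 0).of_le one_le_two) (fun _ => hidem _)
    (periodic_slice hper₂ 0) (hclosed ▸ hW)

end Winding

section LinearChange

variable {E A F : Type*} [NormedAddCommGroup E] [NormedSpace ℝ E] [NormedRing A]
  [NormedAlgebra ℝ A] [NormedAddCommGroup F] [NormedSpace ℝ F]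

theorem berryCurvature_comp_continuousLinearMap {P : F → A} {L : E →L[ℝ] F} {x : E}
    (hP : DifferentiableAt ℝ P (L x)) (u v : E) :
    berryCurvature (fun x => P (L x)) x u v = berryCurvature P (L x) (L u) (L v) := by
  have hfderiv : fderiv ℝ (fun x => P (L x)) x = (fderiv ℝ P (L x)).comp L :=
    (hP.hasFDerivAt.comp x L.hasFDerivAt).fderiv
  simp only [berryCurvature, hfderiv, ContinuousLinearMap.comp_apply]

theorem berryCurvature_eq_smul (P : ℝ × ℝ → A) (k u v : ℝ × ℝ) :
    berryCurvature P k u v =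
      (u.1 * v.2 - u.2 * v.1) • berryCurvature P k (1, 0) (0, 1) := by
  have hbasis (w : ℝ × ℝ) :
      fderiv ℝ P k w = w.1 • fderiv ℝ P k (1, 0) + w.2 • fderiv ℝ P k (0, 1) := by
    rw [← map_smul, ← map_smul, ← map_add]
    simp
  rw [berryCurvature, berryCurvature, hbasis u, hbasis v, ← mul_smul_comm]
  congr 1
  simp only [Ring.lie_def, add_mul, mul_add, smul_mul_assoc, mul_smul_comm, smul_sub]
  module

theorem det_continuousLinearMap_prod (L : ℝ × ℝ →L[ℝ] ℝ × ℝ) :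
    L.det = (L (1, 0)).1 * (L (0, 1)).2 - (L (1, 0)).2 * (L (0, 1)).1 := by
  rw [ContinuousLinearMap.det, ← LinearMap.det_toMatrix (Module.Basis.finTwoProd ℝ),
    det_fin_two]
  simp [LinearMap.toMatrix_apply]
  ring

theorem berryFlux_zero_one_eq_setIntegral (τ : A →L[ℝ] F) {Q : ℝ × ℝ → A} (hQ : ContDiff ℝ 1 Q) :
    berryFlux τ Q 0 1 =
      ∫ x in Ico 0 1 ×ˢ Ico 0 1, τ (berryCurvature Q x (1, 0) (0, 1)) := by
  have hint : IntegrableOn (fun x => τ (berryCurvature Q x (1, 0) (0, 1)))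
      (Ico 0 1 ×ˢ Ico 0 1) (volume.prod volume) :=
    ((τ.continuous.comp (continuous_berryCurvature hQ _ _)).continuousOn.integrableOn_compact
      (isCompact_Icc.prod isCompact_Icc)).mono_set
      (prod_mono Ico_subset_Icc_self Ico_subset_Icc_self)
  rw [Measure.volume_eq_prod, setIntegral_prod _ hint]
  simp only [berryFlux, intervalIntegral.integral_of_le zero_le_one, integral_Ico_eq_integral_Ioc]

theorem setIntegral_image_berryCurvature (τ : A →L[ℝ] F) {P : ℝ × ℝ → A} (hP : ContDiff ℝ 1 P)
    {L : ℝ × ℝ →L[ℝ] ℝ × ℝ} (hL : Function.Injective L) :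
    ∫ k in L '' (Ico 0 1 ×ˢ Ico 0 1), τ (berryCurvature P k (1, 0) (0, 1)) =
      (SignType.sign L.det : ℝ) • berryFlux τ (fun x => P (L x)) 0 1 := by
  have hpullback (x : ℝ × ℝ) : berryCurvature (fun x => P (L x)) x (1, 0) (0, 1) =
      L.det • berryCurvature P (L x) (1, 0) (0, 1) := by
    rw [berryCurvature_comp_continuousLinearMap (hP.differentiable one_ne_zero _),
      berryCurvature_eq_smul, det_continuousLinearMap_prod]
  rw [berryFlux_zero_one_eq_setIntegral τ (Q := fun x => P (L x)) (hP.comp L.contDiff),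
    integral_image_eq_integral_abs_det_fderiv_smul volume (measurableSet_Ico.prod measurableSet_Ico)
      (fun x _ => L.hasFDerivAt.hasFDerivWithinAt) hL.injOn]
  simp only [hpullback, map_smul, integral_smul, smul_smul, sign_mul_self]

end LinearChange

section Lattice

/-- The linear map `(s₁, s₂) ↦ s₁ b₁ + s₂ b₂`, which carries the half-open unit square to the
fundamental domain of the lattice spanned by `b₁` and `b₂`. -/
noncomputable def latticeMap (b₁ b₂ : ℝ × ℝ) : ℝ × ℝ →L[ℝ] ℝ × ℝ :=
  (ContinuousLinearMap.fst ℝ ℝ ℝ).smulRight b₁ + (ContinuousLinearMap.snd ℝ ℝ ℝ).smulRight b₂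

variable {b₁ b₂ : ℝ × ℝ}

theorem latticeMap_apply (x : ℝ × ℝ) : latticeMap b₁ b₂ x = x.1 • b₁ + x.2 • b₂ := rfl

theorem latticeMap_injective (hb : LinearIndependent ℝ ![b₁, b₂]) :
    Function.Injective (latticeMap b₁ b₂) :=
  (injective_iff_map_eq_zero _).2 fun x hx =>
    Prod.ext_iff.2 (LinearIndependent.pair_iff.1 hb x.1 x.2 hx)

theorem latticeMap_image_prod (S T : Set ℝ) :
    latticeMap b₁ b₂ '' (S ×ˢ T) =
      {x | ∃ s₁ s₂ : ℝ, s₁ ∈ S ∧ s₂ ∈ T ∧ x = s₁ • b₁ + s₂ • b₂} := by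
  ext x
  simp [latticeMap_apply, and_assoc, eq_comm]

end Lattice

section Chern

open scoped Matrix.Norms.Operator

-- Smoothness passes through the entries because the entrywise supremum norm, in force outside this
-- section, does not make matrices a normed algebra, as the operator norm used here does.
theorem contDiff_of_contDiff_entries {E α m n : Type*} [NormedAddCommGroup E] [NormedSpace ℝ E]
    [NormedAddCommGroup α] [NormedSpace ℝ α] [FiniteDimensional ℝ α] [Fintype m] [Fintype n]
    {r : WithTop ℕ∞} {P : E → Matrix m n α} (hP : ∀ i j, ContDiff ℝ r fun x => P x i j) :
    ContDiff ℝ r P :=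
  (ofLinearEquiv (m := m) (n := n) (α := α) ℝ).toLinearMap.toContinuousLinearMap.contDiff.comp <|
    contDiff_pi.2 fun i => contDiff_pi.2 (hP i)

variable {n : Type*} [Fintype n] [DecidableEq n]

theorem exists_int_setIntegral_trace_eq {b₁ b₂ : ℝ × ℝ} (hb : LinearIndependent ℝ ![b₁, b₂])
    {P : ℝ × ℝ → Matrix n n ℂ} (hP : ∀ i j, ContDiff ℝ 2 fun k => P k i j)
    (hper₁ : Function.Periodic P b₁) (hper₂ : Function.Periodic P b₂)
    (hidem : ∀ k, IsIdempotentElem (P k)) :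
    ∃ m : ℤ, ∫ k in latticeMap b₁ b₂ '' (Ico 0 1 ×ˢ Ico 0 1),
      (berryCurvature P k (1, 0) (0, 1)).trace = m * (2 * π * I) := by
  have hcont : ContDiff ℝ 2 P := contDiff_of_contDiff_entries hP
  have hmap₁ : latticeMap b₁ b₂ (1, 0) = b₁ := by simp [latticeMap_apply]
  have hmap₂ : latticeMap b₁ b₂ (0, 1) = b₂ := by simp [latticeMap_apply]
  obtain ⟨m, hm⟩ := exists_int_berryFlux_eq (hcont.comp (latticeMap b₁ b₂).contDiff)
    (fun _ => hidem _) (Q := fun x => P (latticeMap b₁ b₂ x))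
    (fun x => by simp only [map_add, hmap₁, hper₁ _])
    (fun x => by simp only [map_add, hmap₂, hper₂ _])
  refine ⟨SignType.sign (latticeMap b₁ b₂).det * m, ?_⟩
  refine (setIntegral_image_berryCurvature (traceCLM n) (hcont.of_le one_le_two)
    (latticeMap_injective hb)).trans ?_
  rw [hm, Complex.real_smul, ← SignType.intCast_cast, ofReal_intCast, Int.cast_mul]
  ring

end Chern

theorem chern_number_integral_general {n : Type*} [Fintype n] {b₁ b₂ : ℝ × ℝ}
    (hb : LinearIndependent ℝ ![b₁, b₂]) {P : ℝ × ℝ → Matrix n n ℂ} (hP : ContDiff ℝ 2 P)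
    (hper₁ : ∀ k, P (k + b₁) = P k) (hper₂ : ∀ k, P (k + b₂) = P k)
    (hproj : ∀ k, P k * P k = P k) :
    ∃ m : ℤ,
      (1 / (2 * (π : ℂ) * Complex.I)) *
        ∫ k in {x : ℝ × ℝ | ∃ s₁ s₂ : ℝ, s₁ ∈ Set.Ico (0:ℝ) 1 ∧ s₂ ∈ Set.Ico (0:ℝ) 1 ∧
            x = s₁ • b₁ + s₂ • b₂},
          Matrix.trace (P k *
            (fderiv ℝ P k (1, 0) * fderiv ℝ P k (0, 1)
              - fderiv ℝ P k (0, 1) * fderiv ℝ P k (1, 0)))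
      = (m : ℂ) := by
  classical
  obtain ⟨m, hm⟩ := exists_int_setIntegral_trace_eq hb
    (fun i j => contDiff_pi.1 (contDiff_pi.1 hP i) j) hper₁ hper₂ hproj
  refine ⟨m, ?_⟩
  rw [latticeMap_image_prod] at hm
  simp only [berryCurvature, Ring.lie_def] at hm
  rw [hm, one_div, mul_comm, mul_inv_cancel_right₀ Complex.two_pi_I_ne_zero]

/-- Integrality of the first Chern number of a smooth, doubly periodic family
of Hermitian projections `P(k)` on the two-torus: the integral
`(1/(2πi)) ∫_B Tr(P [∂₁P, ∂₂P]) dk` over a fundamental domain `B` is an integer. -/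
theorem chern_number_integral (N : ℕ) (hN : 1 ≤ N) (b₁ b₂ : ℝ × ℝ)
    (hb : LinearIndependent ℝ ![b₁, b₂])
    (P : ℝ × ℝ → Matrix (Fin N) (Fin N) ℂ)
    (hsmooth : ContDiff ℝ (⊤ : ℕ∞) P)
    (hper₁ : ∀ k, P (k + b₁) = P k) (hper₂ : ∀ k, P (k + b₂) = P k)
    (hproj : ∀ k, P k * P k = P k)
    (hherm : ∀ k, (P k)ᴴ = P k) :
    ∃ m : ℤ,
      (1 / (2 * (π : ℂ) * Complex.I)) *
        ∫ k in {x : ℝ × ℝ | ∃ s₁ s₂ : ℝ, s₁ ∈ Set.Ico (0:ℝ) 1 ∧ s₂ ∈ Set.Ico (0:ℝ) 1 ∧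
            x = s₁ • b₁ + s₂ • b₂},
          Matrix.trace (P k *
            (fderiv ℝ P k (1, 0) * fderiv ℝ P k (0, 1)
              - fderiv ℝ P k (0, 1) * fderiv ℝ P k (1, 0)))
      = (m : ℂ) :=
  chern_number_integral_general hb (mod_cast contDiff_infty.1 hsmooth 2) hper₁ hper₂ hproj
end

section
/- Homotopy invariance of the Chern number: let b₁, b₂ ∈ ℝ² be linearly independent, N ≥ 1, and let P : [0,1] × ℝ² → M_N(ℂ) be a jointly C^∞ map such that for every s ∈ [0,1] and k ∈ ℝ²: P(s, k + b₁) = P(s, k), P(s, k + b₂) = P(s, k), P(s, k)² = P(s, k), and P(s, k)* = P(s, k). Then the function s ↦ (1/(2πi)) ∫_B Tr( P(s,k) [∂₁P(s,k), ∂₂P(s,k)] ) dk is constant on [0,1], where B = {s₁b₁ + s₂b₂ : s₁, s₂ ∈ [0,1)} is a fundamental domain, ∂_i denotes the partial derivative in the i-th Cartesian coordinate of k, and [A, B] = AB − BA. -/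
open Real Complex MeasureTheory Matrix

attribute [local instance] Matrix.normedAddCommGroup Matrix.normedSpace

/-!
Let `τ` be the trace and write `ω` for the two-form `(a, b) ↦ τ (p [a, b])` on the algebra, so that
the Chern number is a multiple of the integral over the torus of the pullback of `ω` along `P s`.
Differentiating `p² = p` shows that the derivatives of `P` are off-diagonal with respect to `P`. A
product of three off-diagonal elements is off-diagonal and hence has trace zero, and `dω` only
involves the traces of such triple products, so the pullback of `ω` along `P` is closed. By Stokes'
theorem on `[s₁, s₂] × torus`, where the lateral faces cancel by periodicity, its integrals over the
two end faces agree.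
-/

section OffDiagonal

variable {R : Type*} [NonUnitalRing R] {p a b c : R}

/-- `a` is off-diagonal with respect to an idempotent `p` if it maps the range of `p` to the kernel
of `p` and vice versa. These are the tangent vectors at `p` to the space of idempotents. -/
def IsOffDiagonal (p a : R) : Prop := a * p + p * a = a

lemma IsOffDiagonal.mul_mul (ha : IsOffDiagonal p a) (hb : IsOffDiagonal p b)
    (hc : IsOffDiagonal p c) : IsOffDiagonal p (a * b * c) := by
  have hap : a * p = a - p * a := eq_sub_of_add_eq ha
  have hbp : b * p = b - p * b := eq_sub_of_add_eq hb
  have hcp : c * p = c - p * c := eq_sub_of_add_eq hc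
  have habcp : a * b * c * p = a * b * c - p * (a * b * c) := by
    calc a * b * c * p = a * b * c - a * (b * p) * c := by rw [mul_assoc, hcp]; noncomm_ring
      _ = a * p * b * c := by rw [hbp]; noncomm_ring
      _ = a * b * c - p * (a * b * c) := by rw [hap]; noncomm_ring
  rw [IsOffDiagonal, habcp, sub_add_cancel]

lemma IsOffDiagonal.mul_mul_self_eq_zero (hp : IsIdempotentElem p) (ha : IsOffDiagonal p a) :
    p * a * p = 0 := by
  have h : p * (a * p + p * a) = p * a := congrArg (p * ·) ha
  rwa [mul_add, ← mul_assoc p p, hp, add_eq_right, ← mul_assoc] at h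

lemma IsOffDiagonal.map_eq_zero {G : Type*} [AddCommGroup G] {τ : R →+ G}
    (hτ : ∀ x y, τ (x * y) = τ (y * x)) (hp : IsIdempotentElem p) (ha : IsOffDiagonal p a) :
    τ a = 0 := by
  have hpa : τ (p * a) = 0 := by
    rw [← hp, mul_assoc, hτ, ha.mul_mul_self_eq_zero hp, map_zero]
  rw [← ha, map_add, hτ a, hpa, add_zero]

end OffDiagonal

section CurvatureForm

variable {A G : Type*} [NonUnitalNormedRing A] [NormedSpace ℝ A] [IsScalarTower ℝ A A]
  [SMulCommClass ℝ A A] [NormedAddCommGroup G] [NormedSpace ℝ G]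

/-- The commutator `(a, b) ↦ [a, b]` as an alternating map. -/
noncomputable def commutatorForm (A : Type*) [NonUnitalNormedRing A] [NormedSpace ℝ A]
    [IsScalarTower ℝ A A] [SMulCommClass ℝ A A] : A [⋀^Fin 2]→L[ℝ] A :=
  .alternatizeUncurryFin <|
    (ContinuousAlternatingMap.ofSubsingletonLIE 0).toContinuousLinearEquiv.toContinuousLinearMap ∘L
      ContinuousLinearMap.mul ℝ A

lemma commutatorForm_apply (v : Fin 2 → A) :
    commutatorForm A v = v 0 * v 1 - v 1 * v 0 := by
  simp [commutatorForm, ContinuousAlternatingMap.alternatizeUncurryFin_apply, Fin.removeNth,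
    sub_eq_add_neg]

/-- The two-form `(a, b) ↦ τ (p [a, b])` at the point `p` of `A`. Its pullback along a family `P` of
projections is the Berry curvature `τ (P [∂ᵢP, ∂ⱼP])`. -/
noncomputable def curvatureForm (τ : A →L[ℝ] G) : A →L[ℝ] A [⋀^Fin 2]→L[ℝ] G :=
  (ContinuousLinearMap.compContinuousAlternatingMapCLM ℝ A A G (Fin 2)).flip (commutatorForm A) ∘L
    ContinuousLinearMap.compL ℝ A A G τ ∘L ContinuousLinearMap.mul ℝ A

lemma curvatureForm_apply (τ : A →L[ℝ] G) (p : A) (v : Fin 2 → A) :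
    curvatureForm τ p v = τ (p * (v 0 * v 1 - v 1 * v 0)) := by
  simp [curvatureForm, commutatorForm_apply]

lemma extDeriv_curvatureForm_apply_eq_zero {τ : A →L[ℝ] G} (hτ : ∀ a b, τ (a * b) = τ (b * a))
    {p : A} (hp : IsIdempotentElem p) {v : Fin 3 → A} (hv : ∀ i, IsOffDiagonal p (v i)) :
    extDeriv (curvatureForm τ) p v = 0 := by
  have hτv (i j k : Fin 3) : τ (v i * (v j * v k)) = 0 := by
    rw [← mul_assoc]
    exact ((hv i).mul_mul (hv j) (hv k)).map_eq_zero (τ := (τ : A →+ G)) hτ hp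
  simp [extDeriv, ContinuousAlternatingMap.alternatizeUncurryFin_apply, curvatureForm_apply,
    Fin.removeNth, mul_sub, hτv]

lemma isOffDiagonal_of_hasFDerivWithinAt {E : Type*} [NormedAddCommGroup E] [NormedSpace ℝ E]
    {f : E → A} {f' : E →L[ℝ] A} {s : Set E} {x : E} (hf : HasFDerivWithinAt f f' s x)
    (hs : UniqueDiffWithinAt ℝ s x) (hx : x ∈ s) (hfs : ∀ y ∈ s, IsIdempotentElem (f y)) (v : E) :
    IsOffDiagonal (f x) (f' v) := by
  have hmul : HasFDerivWithinAt f _ s x :=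
    ((ContinuousLinearMap.mul ℝ A).hasFDerivWithinAt_of_bilinear hf hf).congr
      (fun y hy ↦ (hfs y hy).symm) (hfs x hx).symm
  have h : f x * f' v + f' v * f x = f' v := DFunLike.congr_fun (hs.eq hmul hf) v
  rw [IsOffDiagonal, add_comm, h]

end CurvatureForm

section Slab

variable {n : ℕ} {a b : ℝ} {G : Type*} [NormedAddCommGroup G] [NormedSpace ℝ G]

/-- The slab `[a, b] × ℝⁿ`. -/
def slab (n : ℕ) (a b : ℝ) : Set (Fin (n + 1) → ℝ) := {x | x 0 ∈ Set.Icc a b}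

lemma slab_mem_nhds {x : Fin (n + 1) → ℝ} (hx : x 0 ∈ Set.Ioo a b) : slab n a b ∈ nhds x :=
  (continuous_apply 0).continuousAt.preimage_mem_nhds (Icc_mem_nhds hx.1 hx.2)

lemma convex_slab : Convex ℝ (slab n a b) :=
  (convex_Icc a b).linear_preimage (LinearMap.proj (φ := fun _ ↦ ℝ) 0)

lemma nonempty_interior_slab (hab : a < b) : (interior (slab n a b)).Nonempty := by
  obtain ⟨c, hc⟩ := Set.nonempty_Ioo.2 hab
  exact ⟨fun _ ↦ c, mem_interior_iff_mem_nhds.2 (slab_mem_nhds hc)⟩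

lemma uniqueDiffOn_slab (hab : a < b) : UniqueDiffOn ℝ (slab n a b) :=
  uniqueDiffOn_convex convex_slab (nonempty_interior_slab hab)

lemma slab_subset_closure_interior (hab : a < b) :
    slab n a b ⊆ closure (interior (slab n a b)) :=
  subset_closure.trans_eq
    (convex_slab.closure_interior_eq_closure_of_nonempty_interior (nonempty_interior_slab hab)).symm

lemma integral_face_eq_of_periodic {f : (Fin (n + 1) → ℝ) → G} (i : Fin n)
    (hper : ∀ x ∈ slab n a b, f (x + Pi.single i.succ 1) = f x) :
    ∫ t in Set.Icc ((Fin.cons a 0 : Fin (n + 1) → ℝ) ∘ i.succ.succAbove)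
        ((Fin.cons b 1 : Fin (n + 1) → ℝ) ∘ i.succ.succAbove), f (i.succ.insertNth 1 t) =
      ∫ t in Set.Icc ((Fin.cons a 0 : Fin (n + 1) → ℝ) ∘ i.succ.succAbove)
        ((Fin.cons b 1 : Fin (n + 1) → ℝ) ∘ i.succ.succAbove), f (i.succ.insertNth 0 t) := by
  refine setIntegral_congr_fun measurableSet_Icc fun t ht ↦ ?_
  have hmem : (i.succ.insertNth 0 t : Fin (n + 1) → ℝ) ∈
      Set.Icc (Fin.cons a 0 : Fin (n + 1) → ℝ) (Fin.cons b 1) :=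
    Fin.insertNth_mem_Icc.2 ⟨by simp, ht⟩
  have hshift : (i.succ.insertNth 1 t : Fin (n + 1) → ℝ) =
      i.succ.insertNth 0 t + Pi.single i.succ 1 := by
    ext j
    cases j using Fin.succAboveCases i.succ <;> simp
  simp only [hshift]
  exact hper _ ⟨hmem.1 0, hmem.2 0⟩

lemma integral_slice_eq_of_divergence_eq_zero [CompleteSpace G] (hab : a ≤ b)
    {F : Fin (n + 1) → (Fin (n + 1) → ℝ) → G}
    {F' : Fin (n + 1) → (Fin (n + 1) → ℝ) → (Fin (n + 1) → ℝ) →L[ℝ] G}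
    (hF : ∀ i, ∀ x ∈ slab n a b, HasFDerivWithinAt (F i) (F' i x) (slab n a b) x)
    (hdiv : ∀ x ∈ slab n a b, ∑ i, F' i x (Pi.single i 1) = 0)
    (hper : ∀ i : Fin n, ∀ x ∈ slab n a b, F i.succ (x + Pi.single i.succ 1) = F i.succ x) :
    ∫ t in Set.Icc 0 1, F 0 (Fin.cons a t) = ∫ t in Set.Icc 0 1, F 0 (Fin.cons b t) := by
  let l : Fin (n + 1) → ℝ := Fin.cons a 0
  let u : Fin (n + 1) → ℝ := Fin.cons b 1
  have hlu : l ≤ u := Fin.cons_le_cons.2 ⟨hab, zero_le_one⟩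
  have hbox : Set.Icc l u ⊆ slab n a b := fun x hx ↦ ⟨hx.1 0, hx.2 0⟩
  have hzero : Set.EqOn (fun x ↦ ∑ i, F' i x (Pi.single i 1)) 0 (Set.Icc l u) :=
    fun x hx ↦ hdiv x (hbox hx)
  have hstokes := integral_divergence_of_hasFDerivAt_off_countable' l u hlu F F' ∅
    Set.countable_empty (fun i x hx ↦ ((hF i x (hbox hx)).continuousWithinAt).mono hbox)
    (fun x hx i ↦ by
      have hx₀ : x 0 ∈ Set.Ioo a b := hx.1 0 (Set.mem_univ 0)
      exact (hF i x (Set.Ioo_subset_Icc_self hx₀)).hasFDerivAt (slab_mem_nhds hx₀))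
    (integrableOn_zero.congr_fun hzero.symm measurableSet_Icc)
  have hlateral : ∀ i : Fin n, _ := fun i ↦ integral_face_eq_of_periodic i (hper i)
  rw [setIntegral_congr_fun measurableSet_Icc hzero, Fin.sum_univ_succ] at hstokes
  have hflux : 0 = (∫ t in Set.Icc 0 1, F 0 (Fin.cons b t)) -
      ∫ t in Set.Icc 0 1, F 0 (Fin.cons a t) := by
    simpa [l, u, hlateral] using hstokes
  exact (sub_eq_zero.1 hflux.symm).symm

lemma integral_slice_eq_of_extDerivWithin_eq_zero [CompleteSpace G] (hab : a < b)
    {η : (Fin (n + 1) → ℝ) → (Fin (n + 1) → ℝ) [⋀^Fin n]→L[ℝ] G}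
    (hη : DifferentiableOn ℝ η (slab n a b))
    (hclosed : ∀ x ∈ slab n a b, extDerivWithin η (slab n a b) x = 0)
    (hper : ∀ i : Fin n, ∀ x ∈ slab n a b, η (x + Pi.single i.succ 1) = η x) :
    ∫ t in Set.Icc 0 1, η (Fin.cons a t) (fun i ↦ Pi.single i.succ 1) =
      ∫ t in Set.Icc 0 1, η (Fin.cons b t) (fun i ↦ Pi.single i.succ 1) := by
  let e : Fin (n + 1) → Fin (n + 1) → ℝ := fun i ↦ Pi.single i 1
  have hηe (i : Fin (n + 1)) (x) (hx : x ∈ slab n a b) :=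
    ((hη x hx).continuousAlternatingMap_apply_const (i.removeNth e)).hasFDerivWithinAt
  have key := integral_slice_eq_of_divergence_eq_zero hab.le
    (F := fun i x ↦ (-1 : ℤ) ^ (i : ℕ) • η x (i.removeNth e))
    (F' := fun i x ↦
      (-1 : ℤ) ^ (i : ℕ) • fderivWithin ℝ (fun y ↦ η y (i.removeNth e)) (slab n a b) x)
    (fun i x hx ↦ (hηe i x hx).fun_const_smul _) (fun x hx ↦ ?_)
    (fun i x hx ↦ by simp only [hper i x hx])
  · simpa [Fin.removeNth_zero, Fin.tail_def, e] using key
  · have hdη := DFunLike.congr_fun (hclosed x hx) e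
    rw [extDerivWithin_apply (hη x hx) (uniqueDiffOn_slab hab x hx)] at hdη
    simpa [e] using hdη

open scoped Pointwise in
lemma single_succ_vadd_slab (i : Fin n) :
    (Pi.single i.succ 1 : Fin (n + 1) → ℝ) +ᵥ slab n a b = slab n a b := by
  ext x
  simp [Set.mem_vadd_set_iff_neg_vadd_mem, slab]

variable {V : Type*} [NormedAddCommGroup V] [NormedSpace ℝ V] {f : (Fin (n + 1) → ℝ) → V}

lemma fderivWithin_slab_add_single {i : Fin n}
    (hper : ∀ x ∈ slab n a b, f (x + Pi.single i.succ 1) = f x) {x : Fin (n + 1) → ℝ}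
    (hx : x ∈ slab n a b) :
    fderivWithin ℝ f (slab n a b) (x + Pi.single i.succ 1) = fderivWithin ℝ f (slab n a b) x := by
  have hshift := fderivWithin_comp_add_right (𝕜 := ℝ) (f := f) (s := slab n a b) (x := x)
    (Pi.single i.succ 1)
  rw [single_succ_vadd_slab] at hshift
  rw [← hshift, fderivWithin_congr hper (hper x hx)]

lemma fderiv_slice_apply_single {c : ℝ} (hc : c ∈ Set.Icc a b) {t : Fin n → ℝ}
    (hf : DifferentiableWithinAt ℝ f (slab n a b) (Fin.cons c t)) (i : Fin n) :
    fderiv ℝ (fun t ↦ f (Fin.cons c t)) t (Pi.single i 1) =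
      fderivWithin ℝ f (slab n a b) (Fin.cons c t) (Pi.single i.succ 1) := by
  have hcons : HasFDerivAt (𝕜 := ℝ) (fun t ↦ (Fin.cons c t : Fin (n + 1) → ℝ))
      (.pi (Fin.cons 0 .proj)) t :=
    hasFDerivAt_pi.2 (Fin.cases (hasFDerivAt_const c t) fun _ ↦ hasFDerivAt_apply _ t)
  have hslice := hf.hasFDerivWithinAt.comp_hasFDerivAt t hcons (.of_forall fun _ ↦ hc)
  have hsingle : (Pi.single i.succ 1 : Fin (n + 1) → ℝ) =
      ContinuousLinearMap.pi (R := ℝ) (Fin.cons 0 .proj) (Pi.single i 1) := by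
    ext j
    cases j using Fin.cases <;> simp [Pi.single_apply]
  rw [hsingle]
  exact DFunLike.congr_fun hslice.fderiv _

lemma integral_slice_pullback_eq [CompleteSpace G] (hab : a < b) {ω : V → V [⋀^Fin n]→L[ℝ] G}
    (hω : Differentiable ℝ ω) (hf : ContDiffOn ℝ 2 f (slab n a b))
    (hclosed : ∀ x ∈ slab n a b,
      (extDeriv ω (f x)).compContinuousLinearMap (fderivWithin ℝ f (slab n a b) x) = 0)
    (hper : ∀ i : Fin n, ∀ x ∈ slab n a b, f (x + Pi.single i.succ 1) = f x) :
    ∫ t in Set.Icc 0 1, ω (f (Fin.cons a t))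
        (fun i ↦ fderiv ℝ (fun t ↦ f (Fin.cons a t)) t (Pi.single i 1)) =
      ∫ t in Set.Icc 0 1, ω (f (Fin.cons b t))
        (fun i ↦ fderiv ℝ (fun t ↦ f (Fin.cons b t)) t (Pi.single i 1)) := by
  let S := slab n a b
  let η : (Fin (n + 1) → ℝ) → (Fin (n + 1) → ℝ) [⋀^Fin n]→L[ℝ] G := fun x ↦
    (ω (f x)).compContinuousLinearMap (fderivWithin ℝ f S x)
  have hS : UniqueDiffOn ℝ S := uniqueDiffOn_slab hab
  have hfS : DifferentiableOn ℝ f S := hf.differentiableOn two_ne_zero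
  have hf' : DifferentiableOn ℝ (fderivWithin ℝ f S) S :=
    (hf.fderivWithin hS (m := 1) (by norm_num)).differentiableOn one_ne_zero
  have hη : DifferentiableOn ℝ η S := fun x hx ↦
    DifferentiableWithinAt.continuousAlternatingMapCompContinuousLinearMap
      ((hω (f x)).comp_differentiableWithinAt x (hfS x hx)) (hf' x hx)
  have hdη (x) (hx : x ∈ S) : extDerivWithin η S x = 0 := by
    rw [← hclosed x hx, ← extDerivWithin_univ]
    exact extDerivWithin_pullback (hω (f x)).differentiableWithinAt (hf x hx) (by simp) hS
      (slab_subset_closure_interior hab hx) hx (Set.mapsTo_univ f S)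
  have hηper (i : Fin n) (x) (hx : x ∈ S) : η (x + Pi.single i.succ 1) = η x := by
    simp only [η, S, hper i x hx, fderivWithin_slab_add_single (hper i) hx]
  have hslice (c : ℝ) (hc : c ∈ Set.Icc a b) (t : Fin n → ℝ) :
      η (Fin.cons c t) (fun i ↦ Pi.single i.succ 1) = ω (f (Fin.cons c t))
        (fun i ↦ fderiv ℝ (fun t ↦ f (Fin.cons c t)) t (Pi.single i 1)) := by
    simp only [fderiv_slice_apply_single hc (hfS _ hc)]
    rfl
  simpa only [hslice a (Set.left_mem_Icc.2 hab.le), hslice b (Set.right_mem_Icc.2 hab.le)] using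
    integral_slice_eq_of_extDerivWithin_eq_zero hab hη hdη hηper

end Slab

lemma integral_slice_curvatureForm_eq {A G : Type*} [NonUnitalNormedRing A] [NormedSpace ℝ A]
    [IsScalarTower ℝ A A] [SMulCommClass ℝ A A] [NormedAddCommGroup G] [NormedSpace ℝ G]
    [CompleteSpace G] {τ : A →L[ℝ] G} (hτ : ∀ x y, τ (x * y) = τ (y * x)) {a b : ℝ} (hab : a < b)
    {f : (Fin 3 → ℝ) → A} (hf : ContDiffOn ℝ 2 f (slab 2 a b))
    (hidem : ∀ x ∈ slab 2 a b, IsIdempotentElem (f x))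
    (hper : ∀ i : Fin 2, ∀ x ∈ slab 2 a b, f (x + Pi.single i.succ 1) = f x) :
    ∫ t in Set.Icc 0 1, curvatureForm τ (f (Fin.cons a t))
        (fun i ↦ fderiv ℝ (fun t ↦ f (Fin.cons a t)) t (Pi.single i 1)) =
      ∫ t in Set.Icc 0 1, curvatureForm τ (f (Fin.cons b t))
        (fun i ↦ fderiv ℝ (fun t ↦ f (Fin.cons b t)) t (Pi.single i 1)) := by
  refine integral_slice_pullback_eq hab (curvatureForm τ).differentiable hf (fun x hx ↦ ?_) hper
  ext v
  exact extDeriv_curvatureForm_apply_eq_zero hτ (hidem x hx) fun i ↦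
    isOffDiagonal_of_hasFDerivWithinAt (hf.differentiableOn two_ne_zero x hx).hasFDerivWithinAt
      (uniqueDiffOn_slab hab x hx) hx hidem (v i)

section UnitCell

variable {E : Type*} [NormedAddCommGroup E] [NormedSpace ℝ E]

/-- The half-open parallelogram spanned by `b₁` and `b₂`. -/
def unitCell (b₁ b₂ : E) : Set E :=
  {x | ∃ t₁ t₂ : ℝ, t₁ ∈ Set.Ico (0 : ℝ) 1 ∧ t₂ ∈ Set.Ico (0 : ℝ) 1 ∧ x = t₁ • b₁ + t₂ • b₂}

lemma unitCell_eq_fundamentalDomain (b : Module.Basis (Fin 2) ℝ E) :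
    unitCell (b 0) (b 1) = ZSpan.fundamentalDomain b := by
  ext x
  rw [ZSpan.mem_fundamentalDomain, Fin.forall_fin_two]
  constructor
  · rintro ⟨t₁, t₂, ht₁, ht₂, rfl⟩
    simpa using ⟨ht₁, ht₂⟩
  · rintro ⟨h₁, h₂⟩
    exact ⟨b.repr x 0, b.repr x 1, h₁, h₂, by
      rw [← Fin.sum_univ_two fun i ↦ b.repr x i • b i, b.sum_repr]⟩

lemma exists_setIntegral_fundamentalDomain_eq_smul {ι G : Type*} [Fintype ι] [MeasurableSpace E]
    [BorelSpace E] [NormedAddCommGroup G] [NormedSpace ℝ G] (b : Module.Basis ι ℝ E)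
    (μ : Measure E) [μ.IsAddHaarMeasure] :
    ∃ c : NNReal, ∀ g : E → G, ∫ x in ZSpan.fundamentalDomain b, g x ∂μ =
      c • ∫ t in Set.Icc 0 1, g (b.equivFun.symm t) := by
  have : FiniteDimensional ℝ E := b.finiteDimensional_of_finite
  let e : (ι → ℝ) ≃L[ℝ] E := b.equivFun.symm.toContinuousLinearEquiv
  have : (volume.map e).IsAddHaarMeasure := e.isAddHaarMeasure_map volume
  have hcell : e ⁻¹' ZSpan.fundamentalDomain b =
      Set.univ.pi fun i ↦ Set.Ico ((0 : ι → ℝ) i) ((1 : ι → ℝ) i) := by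
    ext t
    have ht (i : ι) : b.repr (e t) i = t i := by
      rw [← b.equivFun_apply]
      exact congrFun (b.equivFun.apply_symm_apply t) i
    simp [ZSpan.mem_fundamentalDomain, ht]
  refine ⟨Measure.addHaarScalarFactor μ (volume.map e), fun g ↦ ?_⟩
  conv_lhs => rw [Measure.isAddLeftInvariant_eq_smul μ (volume.map e)]
  have he : MeasurableEmbedding e := e.toHomeomorph.measurableEmbedding
  rw [Measure.restrict_smul, integral_smul_nnreal_measure, he.setIntegral_map, hcell]
  exact congrArg _ (setIntegral_congr_set Measure.univ_pi_Ico_ae_eq_Icc)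

end UnitCell

lemma alternatingMap_apply_eq_basisDet_smul {R M N ι : Type*} [CommRing R] [AddCommGroup M]
    [Module R M] [AddCommGroup N] [Module R N] [Fintype ι] [DecidableEq ι] (b : Module.Basis ι R M)
    (f : M [⋀^ι]→ₗ[R] N) (v : ι → M) : f v = b.det v • f b := by
  have h : f = (LinearMap.toSpanSingleton R N (f b)).compAlternatingMap b.det := by
    refine b.ext_alternating fun i hi ↦ ?_
    let σ : Equiv.Perm ι := Equiv.ofBijective i (Finite.injective_iff_bijective.1 hi)
    change f (b ∘ σ) = b.det (b ∘ σ) • f b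
    simp [AlternatingMap.map_perm, Module.Basis.det_self]
  exact DFunLike.congr_fun h v

lemma fderiv_comp_equivFun_symm_apply_single {ι E V : Type*} [Finite ι] [DecidableEq ι]
    [NormedAddCommGroup E] [NormedSpace ℝ E] [NormedAddCommGroup V] [NormedSpace ℝ V]
    (b : Module.Basis ι ℝ E) (f : E → V) (t : ι → ℝ) (i : ι) :
    fderiv ℝ (fun t ↦ f (b.equivFun.symm t)) t (Pi.single i 1) =
      fderiv ℝ f (b.equivFun.symm t) (b i) := by
  cases nonempty_fintype ι
  have : FiniteDimensional ℝ E := b.finiteDimensional_of_finite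
  have hchain := b.equivFun.symm.toContinuousLinearEquiv.comp_right_fderiv (f := f) (x := t)
  exact (DFunLike.congr_fun hchain _).trans (congrArg _ (Basis.equivFun_symm_single b i))

section ChernNumber

variable {A : Type*} [NonUnitalNormedRing A] [NormedSpace ℝ A] [IsScalarTower ℝ A A]
  [SMulCommClass ℝ A A]

/-- The Chern number of a family of projections `P` over the torus `ℝ² / (ℤ b₁ + ℤ b₂)`, with
values in an algebra with trace `τ`. The torus is encoded by integrating over one unit cell. -/
noncomputable def chernNumber (τ : A →L[ℝ] ℂ) (b₁ b₂ : ℝ × ℝ) (P : ℝ × ℝ → A) : ℂ :=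
  1 / (2 * (π : ℂ) * Complex.I) * ∫ k in unitCell b₁ b₂,
    curvatureForm τ (P k) ![fderiv ℝ P k (1, 0), fderiv ℝ P k (0, 1)]

lemma curvatureForm_apply_cartesian_eq_basisDet_smul {G : Type*} [NormedAddCommGroup G]
    [NormedSpace ℝ G] (b : Module.Basis (Fin 2) ℝ (ℝ × ℝ)) (τ : A →L[ℝ] G) (p : A)
    (L : ℝ × ℝ →L[ℝ] A) :
    curvatureForm τ p ![L (1, 0), L (0, 1)] =
      b.det (Module.Basis.finTwoProd ℝ) • curvatureForm τ p (fun i ↦ L (b i)) := by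
  have hstd : ![L (1, 0), L (0, 1)] = fun i ↦ L (Module.Basis.finTwoProd ℝ i) := by
    ext i
    fin_cases i <;> simp
  rw [hstd]
  exact alternatingMap_apply_eq_basisDet_smul b
    ((curvatureForm τ p).compContinuousLinearMap L).toAlternatingMap (Module.Basis.finTwoProd ℝ)

lemma exists_chernNumber_eq_mul_integral (b : Module.Basis (Fin 2) ℝ (ℝ × ℝ)) :
    ∃ z : ℂ, ∀ (τ : A →L[ℝ] ℂ) (P : ℝ × ℝ → A), chernNumber τ (b 0) (b 1) P =
      z * ∫ t in Set.Icc 0 1, curvatureForm τ (P (b.equivFun.symm t))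
        (fun i ↦ fderiv ℝ (fun t ↦ P (b.equivFun.symm t)) t (Pi.single i 1)) := by
  obtain ⟨c, hc⟩ := exists_setIntegral_fundamentalDomain_eq_smul (G := ℂ) b volume
  refine ⟨1 / (2 * (π : ℂ) * Complex.I) * (c * b.det (Module.Basis.finTwoProd ℝ)), fun τ P ↦ ?_⟩
  simp only [chernNumber, unitCell_eq_fundamentalDomain,
    curvatureForm_apply_cartesian_eq_basisDet_smul b, fderiv_comp_equivFun_symm_apply_single,
    hc, mul_assoc, NNReal.smul_def, Complex.real_smul, integral_const_mul]

lemma chernNumber_eq_of_lt {τ : A →L[ℝ] ℂ} (hτ : ∀ x y, τ (x * y) = τ (y * x))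
    (b : Module.Basis (Fin 2) ℝ (ℝ × ℝ)) {s₁ s₂ : ℝ} (hs : s₁ < s₂) {P : ℝ → ℝ × ℝ → A}
    (hP : ContDiffOn ℝ 2 (fun p : ℝ × (ℝ × ℝ) ↦ P p.1 p.2) (Set.Icc s₁ s₂ ×ˢ Set.univ))
    (hper : ∀ i, ∀ s ∈ Set.Icc s₁ s₂, ∀ k, P s (k + b i) = P s k)
    (hidem : ∀ s ∈ Set.Icc s₁ s₂, ∀ k, IsIdempotentElem (P s k)) :
    chernNumber τ (b 0) (b 1) (P s₁) = chernNumber τ (b 0) (b 1) (P s₂) := by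
  let Φ : (Fin 3 → ℝ) →ₗ[ℝ] ℝ × (ℝ × ℝ) :=
    (LinearMap.proj 0).prod (b.equivFun.symm.toLinearMap ∘ₗ LinearMap.funLeft ℝ ℝ Fin.succ)
  let f : (Fin 3 → ℝ) → A := fun x ↦ P (Φ x).1 (Φ x).2
  have hf : ContDiffOn ℝ 2 f (slab 2 s₁ s₂) :=
    hP.comp Φ.toContinuousLinearMap.contDiff.contDiffOn fun _ hx ↦ ⟨hx, trivial⟩
  have hfper (i : Fin 2) (x) (hx : x ∈ slab 2 s₁ s₂) : f (x + Pi.single i.succ 1) = f x := by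
    have hΦ : Φ (Pi.single i.succ 1) = (0, b i) := by
      have htail : LinearMap.funLeft ℝ ℝ Fin.succ (Pi.single i.succ 1) = Pi.single i 1 := by
        ext j
        simp [LinearMap.funLeft_apply, Pi.single_apply]
      simp [Φ, htail]
    simp only [f, map_add, hΦ, Prod.fst_add, Prod.snd_add, add_zero]
    exact hper i _ hx _
  have hfslice (s : ℝ) (t : Fin 2 → ℝ) : f (Fin.cons s t) = P s (b.equivFun.symm t) := rfl
  have hint := integral_slice_curvatureForm_eq hτ hs hf (fun x hx ↦ hidem _ hx _) hfper
  simp only [hfslice] at hint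
  obtain ⟨z, hz⟩ := exists_chernNumber_eq_mul_integral (A := A) b
  rw [hz, hz, hint]

theorem chern_number_homotopy_invariance_general {τ : A →L[ℝ] ℂ}
    (hτ : ∀ x y, τ (x * y) = τ (y * x)) {b₁ b₂ : ℝ × ℝ} (hb : LinearIndependent ℝ ![b₁, b₂])
    {I : Set ℝ} (hI : I.OrdConnected) {P : ℝ → ℝ × ℝ → A}
    (hP : ContDiffOn ℝ 2 (fun p : ℝ × (ℝ × ℝ) ↦ P p.1 p.2) (I ×ˢ Set.univ))
    (hper₁ : ∀ s ∈ I, ∀ k, P s (k + b₁) = P s k) (hper₂ : ∀ s ∈ I, ∀ k, P s (k + b₂) = P s k)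
    (hidem : ∀ s ∈ I, ∀ k, IsIdempotentElem (P s k)) {s₁ s₂ : ℝ} (hs₁ : s₁ ∈ I) (hs₂ : s₂ ∈ I) :
    chernNumber τ b₁ b₂ (P s₁) = chernNumber τ b₁ b₂ (P s₂) := by
  wlog hlt : s₁ < s₂ generalizing s₁ s₂
  · obtain rfl | hlt' := (not_lt.1 hlt).eq_or_lt
    exacts [rfl, (this hs₂ hs₁ hlt').symm]
  obtain ⟨b, rfl, rfl⟩ : ∃ b : Module.Basis (Fin 2) ℝ (ℝ × ℝ), b 0 = b₁ ∧ b 1 = b₂ :=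
    ⟨basisOfLinearIndependentOfCardEqFinrank hb (by simp), by simp, by simp⟩
  have hsub : Set.Icc s₁ s₂ ⊆ I := hI.out hs₁ hs₂
  exact chernNumber_eq_of_lt hτ b hlt (hP.mono (Set.prod_mono_left hsub))
    (Fin.forall_fin_two.2 ⟨fun s hs ↦ hper₁ s (hsub hs), fun s hs ↦ hper₂ s (hsub hs)⟩)
    fun s hs ↦ hidem s (hsub hs)

end ChernNumber

section Matrix

variable {n : Type*} [Fintype n] [DecidableEq n]

/-- A matrix as an operator on Euclidean space. The operator norm is submultiplicative, which the
entrywise norm of the theorem is not. -/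
noncomputable def matrixOperatorEquiv (n : Type*) [Fintype n] [DecidableEq n] :
    Matrix n n ℂ ≃L[ℝ] (EuclideanSpace ℂ n →L[ℂ] EuclideanSpace ℂ n) :=
  LinearEquiv.toContinuousLinearEquiv <|
    (toEuclideanCLM (n := n) (𝕜 := ℂ)).toAlgEquiv.toLinearEquiv.restrictScalars ℝ

lemma matrixOperatorEquiv_mul (M M' : Matrix n n ℂ) :
    matrixOperatorEquiv n (M * M') = matrixOperatorEquiv n M * matrixOperatorEquiv n M' :=
  map_mul (toEuclideanCLM (n := n) (𝕜 := ℂ)) M M'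

/-- The trace of an operator on Euclidean space. -/
noncomputable def operatorTrace (n : Type*) [Fintype n] [DecidableEq n] :
    (EuclideanSpace ℂ n →L[ℂ] EuclideanSpace ℂ n) →L[ℝ] ℂ :=
  (traceLinearMap n ℝ ℂ).toContinuousLinearMap ∘L
    (matrixOperatorEquiv n).symm.toContinuousLinearMap

lemma operatorTrace_matrixOperatorEquiv (M : Matrix n n ℂ) :
    operatorTrace n (matrixOperatorEquiv n M) = trace M := by
  simp [operatorTrace]

lemma operatorTrace_mul_comm (x y : EuclideanSpace ℂ n →L[ℂ] EuclideanSpace ℂ n) :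
    operatorTrace n (x * y) = operatorTrace n (y * x) := by
  obtain ⟨M, rfl⟩ := (matrixOperatorEquiv n).surjective x
  obtain ⟨M', rfl⟩ := (matrixOperatorEquiv n).surjective y
  simp only [← matrixOperatorEquiv_mul, operatorTrace_matrixOperatorEquiv, trace_mul_comm M]

lemma chernNumber_matrixOperatorEquiv (b₁ b₂ : ℝ × ℝ) (Q : ℝ × ℝ → Matrix n n ℂ) :
    chernNumber (operatorTrace n) b₁ b₂ (fun k ↦ matrixOperatorEquiv n (Q k)) =
      1 / (2 * (π : ℂ) * Complex.I) * ∫ k in unitCell b₁ b₂,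
        trace (Q k * (fderiv ℝ Q k (1, 0) * fderiv ℝ Q k (0, 1) -
          fderiv ℝ Q k (0, 1) * fderiv ℝ Q k (1, 0))) := by
  have hderiv (k v : ℝ × ℝ) : fderiv ℝ (fun k ↦ matrixOperatorEquiv n (Q k)) k v =
      matrixOperatorEquiv n (fderiv ℝ Q k v) :=
    DFunLike.congr_fun ((matrixOperatorEquiv n).comp_fderiv) v
  simp only [chernNumber, curvatureForm_apply, hderiv, cons_val_zero, cons_val_one,
    ← matrixOperatorEquiv_mul, ← map_sub, operatorTrace_matrixOperatorEquiv]

end Matrix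

/-- Homotopy invariance of the Chern number: for a jointly smooth family
`s ↦ P(s, ·)` of doubly periodic Hermitian projections over the two-torus, the Chern number
`(1/(2πi)) ∫_B Tr(P [∂₁P, ∂₂P]) dk` is constant in the deformation parameter `s ∈ [0,1]`. -/
theorem chern_number_homotopy_invariance (N : ℕ) (hN : 1 ≤ N) (b₁ b₂ : ℝ × ℝ)
    (hb : LinearIndependent ℝ ![b₁, b₂])
    (P : ℝ → ℝ × ℝ → Matrix (Fin N) (Fin N) ℂ)
    (hsmooth : ContDiffOn ℝ (⊤ : ℕ∞) (fun p : ℝ × (ℝ × ℝ) => P p.1 p.2)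
      (Set.Icc (0:ℝ) 1 ×ˢ (Set.univ : Set (ℝ × ℝ))))
    (hper₁ : ∀ s ∈ Set.Icc (0:ℝ) 1, ∀ k, P s (k + b₁) = P s k)
    (hper₂ : ∀ s ∈ Set.Icc (0:ℝ) 1, ∀ k, P s (k + b₂) = P s k)
    (hproj : ∀ s ∈ Set.Icc (0:ℝ) 1, ∀ k, P s k * P s k = P s k)
    (hherm : ∀ s ∈ Set.Icc (0:ℝ) 1, ∀ k, (P s k)ᴴ = P s k) :
    ∀ s₁ ∈ Set.Icc (0:ℝ) 1, ∀ s₂ ∈ Set.Icc (0:ℝ) 1,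
      (1 / (2 * (π : ℂ) * Complex.I)) *
        ∫ k in {x : ℝ × ℝ | ∃ t₁ t₂ : ℝ, t₁ ∈ Set.Ico (0:ℝ) 1 ∧ t₂ ∈ Set.Ico (0:ℝ) 1 ∧
            x = t₁ • b₁ + t₂ • b₂},
          Matrix.trace (P s₁ k *
            (fderiv ℝ (P s₁) k (1, 0) * fderiv ℝ (P s₁) k (0, 1)
              - fderiv ℝ (P s₁) k (0, 1) * fderiv ℝ (P s₁) k (1, 0)))
      = (1 / (2 * (π : ℂ) * Complex.I)) *
        ∫ k in {x : ℝ × ℝ | ∃ t₁ t₂ : ℝ, t₁ ∈ Set.Ico (0:ℝ) 1 ∧ t₂ ∈ Set.Ico (0:ℝ) 1 ∧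
            x = t₁ • b₁ + t₂ • b₂},
          Matrix.trace (P s₂ k *
            (fderiv ℝ (P s₂) k (1, 0) * fderiv ℝ (P s₂) k (0, 1)
              - fderiv ℝ (P s₂) k (0, 1) * fderiv ℝ (P s₂) k (1, 0))) := by
  intro s₁ hs₁ s₂ hs₂
  have hinv := chern_number_homotopy_invariance_general operatorTrace_mul_comm hb
    Set.ordConnected_Icc (P := fun s k ↦ matrixOperatorEquiv (Fin N) (P s k))
    ((matrixOperatorEquiv (Fin N)).contDiff.comp_contDiffOn
      (hsmooth.of_le (WithTop.coe_le_coe.2 (le_top : (2 : ℕ∞) ≤ ⊤))))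
    (fun s hs k ↦ congrArg _ (hper₁ s hs k)) (fun s hs k ↦ congrArg _ (hper₂ s hs k))
    (fun s hs k ↦ (matrixOperatorEquiv_mul _ _).symm.trans (congrArg _ (hproj s hs k))) hs₁ hs₂
  rwa [chernNumber_matrixOperatorEquiv, chernNumber_matrixOperatorEquiv] at hinv
end
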